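/- arXiv:math/9806008 — 2 statements merged into one kernel-verified Lean document; each statement's English description precedes it below -/
import Mathlib

section
/- The construction theorem: under its hypotheses (coquasitriangular H, left coideal subalgebra X with invertibility-closure property, comodule bases e^i and b^i in X, covariant algebra endomorphism ν of X, invertible matrix χ^{ij} = χ^i(e^j) with χ^i(a) = r(b^i ⊗ ν(a)) − ε(b^i)ε(a)), there exists a unique (up to isomorphism) covariant first order differential calculus (Γ, d) on X in which every element of Γ is uniquely Σ_i a_i d e^i and d a = Σ_i ∂_i(a) d e^i with ∂_i(a) = a_{(1)} χ^k(a_{(2)}) (χ^{-1})_{jk} S(π^j_i). -/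
open TensorProduct MulOpposite

/-- A covariant first order differential calculus on a left coideal subalgebra `X ⊆ H`,
satisfying the freeness condition with respect to `e : Fin M → X`. -/
structure CovCalc {H : Type} [Ring H] [HopfAlgebra ℂ H] (X : Subalgebra ℂ H)
    (comulX : X →ₗ[ℂ] H ⊗[ℂ] X) {M : ℕ} (e : Fin M → X) where
  Γ : Type
  [grp : AddCommGroup Γ]
  [modC : Module ℂ Γ]
  [modL : Module X Γ]
  [modR : Module Xᵐᵒᵖ Γ]
  [comm : SMulCommClass X Xᵐᵒᵖ Γ]
  [tower : IsScalarTower ℂ X Γ]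
  d : X →ₗ[ℂ] Γ
  leibniz : ∀ a b : X, d (a * b) = a • d b + op b • d a
  spanning : Submodule.span ℂ {x : Γ | ∃ a b : X, x = a • d b} = ⊤
  free : ∀ ω : Γ, ∃! c : Fin M → X, ω = ∑ i, c i • d (e i)
  covariant : ∃ ΔΓ : Γ →ₗ[ℂ] H ⊗[ℂ] Γ,
    ∀ (a b : X) (ι κ : Type) (_ : Fintype ι) (_ : Fintype κ)
      (a1 : ι → H) (a2 : ι → X) (b1 : κ → H) (b2 : κ → X),
      comulX a = ∑ t, a1 t ⊗ₜ[ℂ] a2 t → comulX b = ∑ s, b1 s ⊗ₜ[ℂ] b2 s →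
      ΔΓ (a • d b) = ∑ t, ∑ s, (a1 t * b1 s) ⊗ₜ[ℂ] (a2 t • d (b2 s))

attribute [instance] CovCalc.grp CovCalc.modC CovCalc.modL CovCalc.modR
  CovCalc.comm CovCalc.tower

/-- Isomorphism of two such calculi. -/
def CovCalc.Iso {H : Type} [Ring H] [HopfAlgebra ℂ H] {X : Subalgebra ℂ H}
    {comulX : X →ₗ[ℂ] H ⊗[ℂ] X} {M : ℕ} {e : Fin M → X}
    (c c' : CovCalc X comulX e) : Prop :=
  ∃ φ : c.Γ ≃ₗ[ℂ] c'.Γ,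
    (∀ a : X, φ (c.d a) = c'.d a) ∧
    (∀ (a : X) (x : c.Γ), φ (a • x) = a • φ x) ∧
    (∀ (a : X) (x : c.Γ), φ (op a • x) = op a • φ x)


section aux
variable {H : Type} [Ring H] [HopfAlgebra ℂ H] {M : ℕ}

theorem aux_S_mul (ψ : Fin M → Fin M → H)
    (hΔψ : ∀ i j, Coalgebra.comul (R := ℂ) (ψ i j) = ∑ k, ψ i k ⊗ₜ[ℂ] ψ k j)
    (hεψ : ∀ i j, Coalgebra.counit (R := ℂ) (ψ i j) = if i = j then 1 else 0) (i j : Fin M) :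
    ∑ k, HopfAlgebra.antipode ℂ (ψ i k) * ψ k j = if i = j then 1 else 0 := by
  have h := HopfAlgebra.mul_antipode_rTensor_comul_apply (R := ℂ) (ψ i j)
  rw [hΔψ, hεψ] at h
  simpa [apply_ite (algebraMap ℂ H)] using h

theorem aux_mul_S (ψ : Fin M → Fin M → H)
    (hΔψ : ∀ i j, Coalgebra.comul (R := ℂ) (ψ i j) = ∑ k, ψ i k ⊗ₜ[ℂ] ψ k j)
    (hεψ : ∀ i j, Coalgebra.counit (R := ℂ) (ψ i j) = if i = j then 1 else 0) (i j : Fin M) :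
    ∑ k, ψ i k * HopfAlgebra.antipode ℂ (ψ k j) = if i = j then 1 else 0 := by
  have h := HopfAlgebra.mul_antipode_lTensor_comul_apply (R := ℂ) (ψ i j)
  rw [hΔψ, hεψ] at h
  simpa [apply_ite (algebraMap ℂ H)] using h

theorem aux_comul_S (ψ : Fin M → Fin M → H)
    (hΔψ : ∀ i j, Coalgebra.comul (R := ℂ) (ψ i j) = ∑ k, ψ i k ⊗ₜ[ℂ] ψ k j)
    (hεψ : ∀ i j, Coalgebra.counit (R := ℂ) (ψ i j) = if i = j then 1 else 0) (i j : Fin M) :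
    Coalgebra.comul (R := ℂ) (HopfAlgebra.antipode ℂ (ψ i j)) =
      ∑ l, HopfAlgebra.antipode ℂ (ψ l j) ⊗ₜ[ℂ] HopfAlgebra.antipode ℂ (ψ i l) := by
  let P : Matrix (Fin M) (Fin M) (H ⊗[ℂ] H) := fun i j => Coalgebra.comul (R := ℂ) (ψ i j)
  let Q : Matrix (Fin M) (Fin M) (H ⊗[ℂ] H) := fun i j =>
    Coalgebra.comul (R := ℂ) (HopfAlgebra.antipode ℂ (ψ i j))
  let Q' : Matrix (Fin M) (Fin M) (H ⊗[ℂ] H) := fun i j =>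
    ∑ l, HopfAlgebra.antipode ℂ (ψ l j) ⊗ₜ[ℂ] HopfAlgebra.antipode ℂ (ψ i l)
  have h1 : P * Q = 1 := by
    ext i j
    have h := congrArg (Bialgebra.comulAlgHom ℂ H) (aux_mul_S ψ hΔψ hεψ i j)
    rw [map_sum] at h
    simp only [map_mul, apply_ite (Bialgebra.comulAlgHom ℂ H), map_one, map_zero] at h
    rw [Matrix.mul_apply, Matrix.one_apply]
    exact h
  have h2 : Q' * P = 1 := by
    ext i j
    rw [Matrix.mul_apply, Matrix.one_apply]
    simp only [P, Q', hΔψ, Finset.sum_mul, Finset.mul_sum, Algebra.TensorProduct.tmul_mul_tmul]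
    have : ∀ l k, ∑ x, (HopfAlgebra.antipode ℂ (ψ l x) * ψ x k) ⊗ₜ[ℂ]
        (HopfAlgebra.antipode ℂ (ψ i l) * ψ k j) = if l = k then
          (1 : H) ⊗ₜ[ℂ] (HopfAlgebra.antipode ℂ (ψ i l) * ψ k j) else 0 := by
      intro l k
      rw [← TensorProduct.sum_tmul, aux_S_mul ψ hΔψ hεψ]
      split_ifs <;> simp
    calc _ = ∑ l, ∑ k, ∑ x, (HopfAlgebra.antipode ℂ (ψ l x) * ψ x k) ⊗ₜ[ℂ]
        (HopfAlgebra.antipode ℂ (ψ i l) * ψ k j) := by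
          rw [Finset.sum_comm]
          rw [Finset.sum_comm]
          conv_lhs => enter [2, x]; rw [Finset.sum_comm]
          rw [Finset.sum_comm]
          refine Finset.sum_congr rfl fun l _ => ?_
          rw [Finset.sum_comm]
      _ = _ := by
          simp only [this, Finset.sum_ite_eq, Finset.mem_univ, if_true]
          rw [← TensorProduct.tmul_sum, aux_S_mul ψ hΔψ hεψ]
          split_ifs <;> simp [Algebra.TensorProduct.one_def]
  have h3 : Q' = Q := left_inv_eq_right_inv h2 h1
  exact (congrFun (congrFun h3 i) j).symm

theorem aux_counit_S (ψ : Fin M → Fin M → H)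
    (hΔψ : ∀ i j, Coalgebra.comul (R := ℂ) (ψ i j) = ∑ k, ψ i k ⊗ₜ[ℂ] ψ k j)
    (hεψ : ∀ i j, Coalgebra.counit (R := ℂ) (ψ i j) = if i = j then 1 else 0) (i j : Fin M) :
    Coalgebra.counit (R := ℂ) (HopfAlgebra.antipode ℂ (ψ i j)) = if i = j then 1 else 0 := by
  have h := congrArg (Bialgebra.counitAlgHom ℂ H) (aux_mul_S ψ hΔψ hεψ i j)
  rw [map_sum] at h
  simp only [map_mul, Bialgebra.counitAlgHom_apply, hεψ, apply_ite (Bialgebra.counitAlgHom ℂ H),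
    map_one, map_zero] at h
  simpa [apply_ite (Coalgebra.counit (R := ℂ) (A := H))] using h

/-- `S²` versus `S`. -/
theorem aux_SS_mul (ψ : Fin M → Fin M → H)
    (hΔψ : ∀ i j, Coalgebra.comul (R := ℂ) (ψ i j) = ∑ k, ψ i k ⊗ₜ[ℂ] ψ k j)
    (hεψ : ∀ i j, Coalgebra.counit (R := ℂ) (ψ i j) = if i = j then 1 else 0) (i j : Fin M) :
    ∑ k, HopfAlgebra.antipode ℂ (HopfAlgebra.antipode ℂ (ψ k j)) *
      HopfAlgebra.antipode ℂ (ψ i k) = if i = j then 1 else 0 := by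
  have h := HopfAlgebra.mul_antipode_rTensor_comul_apply (R := ℂ) (HopfAlgebra.antipode ℂ (ψ i j))
  rw [aux_comul_S ψ hΔψ hεψ, aux_counit_S ψ hΔψ hεψ] at h
  simpa [apply_ite (algebraMap ℂ H)] using h

theorem aux_mul_SS (ψ : Fin M → Fin M → H)
    (hΔψ : ∀ i j, Coalgebra.comul (R := ℂ) (ψ i j) = ∑ k, ψ i k ⊗ₜ[ℂ] ψ k j)
    (hεψ : ∀ i j, Coalgebra.counit (R := ℂ) (ψ i j) = if i = j then 1 else 0) (i j : Fin M) :
    ∑ k, HopfAlgebra.antipode ℂ (ψ k j) *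
      HopfAlgebra.antipode ℂ (HopfAlgebra.antipode ℂ (ψ i k)) = if i = j then 1 else 0 := by
  have h := HopfAlgebra.mul_antipode_lTensor_comul_apply (R := ℂ) (HopfAlgebra.antipode ℂ (ψ i j))
  rw [aux_comul_S ψ hΔψ hεψ, aux_counit_S ψ hΔψ hεψ] at h
  simpa [apply_ite (algebraMap ℂ H)] using h

/-- Invertibility of the transpose of a matrix corepresentation. -/
theorem aux_transpose_inv (r : H →ₗ[ℂ] H →ₗ[ℂ] ℂ)
    (hr1 : ∀ (a b : H) (ι κ : Type) (_ : Fintype ι) (_ : Fintype κ)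
      (a1 a2 : ι → H) (b1 b2 : κ → H),
      Coalgebra.comul (R := ℂ) a = ∑ t, a1 t ⊗ₜ[ℂ] a2 t →
      Coalgebra.comul (R := ℂ) b = ∑ s, b1 s ⊗ₜ[ℂ] b2 s →
      ∑ t, ∑ s, r (a1 t) (b1 s) • (a2 t * b2 s)
        = ∑ t, ∑ s, r (a2 t) (b2 s) • (b1 s * a1 t))
    (hr3 : ∀ (a b c : H) (ι : Type) (_ : Fintype ι) (a1 a2 : ι → H),
      Coalgebra.comul (R := ℂ) a = ∑ t, a1 t ⊗ₜ[ℂ] a2 t →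
      r a (b * c) = ∑ t, r (a1 t) c * r (a2 t) b)
    (hr3' : ∀ a : H, r a 1 = Coalgebra.counit (R := ℂ) a)
    (ψ : Fin M → Fin M → H)
    (hΔψ : ∀ i j, Coalgebra.comul (R := ℂ) (ψ i j) = ∑ k, ψ i k ⊗ₜ[ℂ] ψ k j)
    (hεψ : ∀ i j, Coalgebra.counit (R := ℂ) (ψ i j) = if i = j then 1 else 0) :
    ∃ V : Matrix (Fin M) (Fin M) H,
      (Matrix.of fun j k => ψ k j) * V = 1 ∧ V * (Matrix.of fun j k => ψ k j) = 1 := by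
  have mulS := aux_mul_S ψ hΔψ hεψ
  have Smul := aux_S_mul ψ hΔψ hεψ
  have SSmul := aux_SS_mul ψ hΔψ hεψ
  have mulSS := aux_mul_SS ψ hΔψ hεψ
  have comulS := aux_comul_S ψ hΔψ hεψ
  generalize hs : (fun i j => HopfAlgebra.antipode ℂ (ψ i j)) = s at *
  have hs' : ∀ i j, HopfAlgebra.antipode ℂ (ψ i j) = s i j := fun i j =>
    congrFun (congrFun hs i) j
  simp only [hs'] at mulS Smul SSmul mulSS comulS
  generalize hss : (fun i j => HopfAlgebra.antipode ℂ (s i j)) = ss at *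
  have hss' : ∀ i j, HopfAlgebra.antipode ℂ (s i j) = ss i j := fun i j =>
    congrFun (congrFun hss i) j
  simp only [hss'] at SSmul mulSS
  clear hss hss' hs hs'
  have rel0 : ∀ i j k l, ∑ p, ∑ m, r (ψ i p) (s m l) • (ψ p j * s k m) =
      ∑ p, ∑ m, r (ψ p j) (s k m) • (s m l * ψ i p) := fun i j k l =>
    hr1 (ψ i j) (s k l) _ _ _ _ _ _ _ _ (hΔψ i j) (comulS k l)
  let A : Matrix (Fin M) (Fin M) ℂ := fun i l => ∑ m, r (ψ i m) (s m l)
  let B : Matrix (Fin M) (Fin M) ℂ := fun p m => ∑ i, r (ψ i p) (s m i)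
  have relA : ∀ i l, ∑ p, ∑ m, A p m • (s m l * ψ i p) = A i l • (1 : H) := by
    intro i l
    have h : ∑ j, ∑ p, ∑ m, r (ψ i p) (s m l) • (ψ p j * s j m) =
      ∑ j, ∑ p, ∑ m, r (ψ p j) (s j m) • (s m l * ψ i p) :=
        Finset.sum_congr rfl fun j _ => rel0 i j j l
    calc _ = ∑ j, ∑ p, ∑ m, r (ψ p j) (s j m) • (s m l * ψ i p) := by
          simp only [A, Finset.sum_smul]
          conv_rhs => rw [Finset.sum_comm]
          refine Finset.sum_congr rfl fun p _ => ?_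
          rw [Finset.sum_comm]
      _ = _ := by
          rw [← h, Finset.sum_comm]
          simp only [A, Finset.sum_smul]
          refine Finset.sum_congr rfl fun p _ => ?_
          rw [Finset.sum_comm]
          simp only [← Finset.smul_sum, mulS]
          simp
  have relB : ∀ j k, ∑ p, ∑ m, B p m • (ψ p j * s k m) = B j k • (1 : H) := by
    intro j k
    have h : ∑ i, ∑ p, ∑ m, r (ψ i p) (s m i) • (ψ p j * s k m) =
      ∑ i, ∑ p, ∑ m, r (ψ p j) (s k m) • (s m i * ψ i p) :=
        Finset.sum_congr rfl fun i _ => rel0 i j k i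
    calc _ = ∑ i, ∑ p, ∑ m, r (ψ i p) (s m i) • (ψ p j * s k m) := by
          simp only [B, Finset.sum_smul]
          conv_rhs => rw [Finset.sum_comm]
          refine Finset.sum_congr rfl fun p _ => ?_
          rw [Finset.sum_comm]
      _ = _ := by
          rw [h, Finset.sum_comm]
          simp only [B, Finset.sum_smul]
          refine Finset.sum_congr rfl fun p _ => ?_
          rw [Finset.sum_comm]
          simp only [← Finset.smul_sum, Smul]
          simp
  have intA : ∀ i x, ∑ l, A i l • ss l x = ∑ p, A p x • ψ i p := by
    intro i x
    calc _ = ∑ l, ss l x * (A i l • (1 : H)) := by simp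
      _ = ∑ l, ∑ p, ∑ m, A p m • (ss l x * s m l * ψ i p) := by
          simp only [← relA, Finset.mul_sum, mul_smul_comm, mul_assoc]
      _ = ∑ p, ∑ m, A p m • ((∑ l, ss l x * s m l) * ψ i p) := by
          rw [Finset.sum_comm]
          refine Finset.sum_congr rfl fun p _ => ?_
          rw [Finset.sum_comm]
          simp only [Finset.sum_mul, Finset.smul_sum]
      _ = _ := by simp [SSmul]
  have intB : ∀ j x, ∑ k, B j k • ss x k = ∑ p, B p x • ψ p j := by
    intro j x
    calc _ = ∑ k, (B j k • (1 : H)) * ss x k := by simp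
      _ = ∑ k, ∑ p, ∑ m, B p m • (ψ p j * (s k m * ss x k)) := by
          simp only [← relB, Finset.sum_mul, smul_mul_assoc, mul_assoc]
      _ = ∑ p, ∑ m, B p m • (ψ p j * (∑ k, s k m * ss x k)) := by
          rw [Finset.sum_comm]
          refine Finset.sum_congr rfl fun p _ => ?_
          rw [Finset.sum_comm]
          simp only [Finset.mul_sum, Finset.smul_sum]
      _ = _ := by simp [mulSS]
  let C : Matrix (Fin M) (Fin M) ℂ := fun l k => ∑ j, r (ss l j) (ψ j k)
  let C' : Matrix (Fin M) (Fin M) ℂ := fun k l => ∑ x, r (ss x k) (ψ l x)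
  have hAC : A * C = 1 := by
    ext i k
    rw [Matrix.mul_apply, Matrix.one_apply]
    calc _ = ∑ j, r (∑ l, A i l • ss l j) (ψ j k) := by
          simp only [C, map_sum, map_smul, LinearMap.sum_apply, LinearMap.smul_apply,
            Finset.mul_sum, smul_eq_mul]
          rw [Finset.sum_comm]
      _ = ∑ j, ∑ p, ∑ q, r (ψ i p) (ψ j k) * r (ψ p q) (s q j) := by
          simp only [intA, A, map_sum, map_smul, LinearMap.sum_apply, LinearMap.smul_apply,
            Finset.mul_sum, smul_eq_mul, mul_comm]
      _ = ∑ q, ∑ j, ∑ p, r (ψ i p) (ψ j k) * r (ψ p q) (s q j) := by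
          conv_rhs => rw [Finset.sum_comm]
          refine Finset.sum_congr rfl fun p _ => ?_
          rw [Finset.sum_comm]
      _ = ∑ q, r (ψ i q) (∑ j, s q j * ψ j k) := by
          simp only [map_sum]
          refine Finset.sum_congr rfl fun q _ => Finset.sum_congr rfl fun j _ => ?_
          exact (hr3 _ _ _ _ _ _ _ (hΔψ i q)).symm
      _ = _ := by
          simp [Smul, apply_ite, hr3', hεψ]
  have hBC : B * C' = 1 := by
    ext j l
    rw [Matrix.mul_apply, Matrix.one_apply]
    calc _ = ∑ x, r (∑ k, B j k • ss x k) (ψ l x) := by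
          simp only [C', map_sum, map_smul, LinearMap.sum_apply, LinearMap.smul_apply,
            Finset.mul_sum, smul_eq_mul]
          rw [Finset.sum_comm]
      _ = ∑ x, ∑ p, ∑ q, r (ψ q p) (s x q) * r (ψ p j) (ψ l x) := by
          simp only [intB, B, map_sum, map_smul, LinearMap.sum_apply, LinearMap.smul_apply,
            Finset.sum_mul, smul_eq_mul]
      _ = ∑ q, ∑ x, ∑ p, r (ψ q p) (s x q) * r (ψ p j) (ψ l x) := by
          conv_rhs => rw [Finset.sum_comm]
          refine Finset.sum_congr rfl fun p _ => ?_
          rw [Finset.sum_comm]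
      _ = ∑ q, r (ψ q j) (∑ x, ψ l x * s x q) := by
          simp only [map_sum]
          refine Finset.sum_congr rfl fun q _ => Finset.sum_congr rfl fun x _ => ?_
          exact (hr3 _ _ _ _ _ _ _ (hΔψ q j)).symm
      _ = _ := by
          simp [mulS, apply_ite, hr3', hεψ, eq_comm]
  have hCA : C * A = 1 := mul_eq_one_comm.mp hAC
  let T : Matrix (Fin M) (Fin M) H := Matrix.of fun j k => ψ k j
  let Z : Matrix (Fin M) (Fin M) H := fun p k => ∑ m, B p m • s k m
  let W : Matrix (Fin M) (Fin M) H := fun l p => ∑ m, A p m • s m l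
  let f := algebraMap ℂ H
  have hTZ : T * Z = B.map f := by
    ext j k
    rw [Matrix.mul_apply, Matrix.map_apply, Algebra.algebraMap_eq_smul_one, ← relB]
    simp [T, Z, Finset.mul_sum]
  have hWT : W * T = A.transpose.map f := by
    ext l i
    rw [Matrix.mul_apply, Matrix.map_apply, Algebra.algebraMap_eq_smul_one, Matrix.transpose_apply,
      ← relA]
    simp [T, W, Finset.sum_mul]
  have hR : T * (Z * C'.map f) = 1 := by
    rw [← mul_assoc, hTZ, ← Matrix.map_mul, hBC, Matrix.map_one f (map_zero f) (map_one f)]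
  have hL : (C.transpose.map f * W) * T = 1 := by
    rw [mul_assoc, hWT, ← Matrix.map_mul, ← Matrix.transpose_mul, hAC, Matrix.transpose_one,
      Matrix.map_one f (map_zero f) (map_one f)]
  refine ⟨Z * C'.map f, hR, ?_⟩
  rw [← left_inv_eq_right_inv hL hR]
  exact hL

end aux
section aux2
variable {H : Type} [Ring H] [HopfAlgebra ℂ H] {M : ℕ} {X : Subalgebra ℂ H}

/-- slice map -/
noncomputable def auxL (φ : X →ₗ[ℂ] ℂ) : H ⊗[ℂ] X →ₗ[ℂ] H :=
  (TensorProduct.rid ℂ H).toLinearMap ∘ₗ φ.lTensor H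

theorem auxL_tmul (φ : X →ₗ[ℂ] ℂ) (h : H) (x : X) : auxL φ (h ⊗ₜ[ℂ] x) = φ x • h := by
  simp [auxL]

/-- the inclusion `H ⊗ X → H ⊗ H` as an algebra map -/
noncomputable def auxι (X : Subalgebra ℂ H) : H ⊗[ℂ] X →ₐ[ℂ] H ⊗[ℂ] H :=
  Algebra.TensorProduct.map (AlgHom.id ℂ H) X.val

theorem auxι_tmul (h : H) (x : X) : auxι X (h ⊗ₜ[ℂ] x) = h ⊗ₜ[ℂ] (x : H) := by
  simp [auxι]

theorem auxι_eq (z : H ⊗[ℂ] X) :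
    auxι X z = (TensorProduct.map LinearMap.id X.val.toLinearMap) z := by
  rfl

theorem auxι_inj : Function.Injective (auxι X) := by
  have : Function.Injective (X.val.toLinearMap.lTensor H) :=
    Module.Flat.lTensor_preserves_injective_linearMap _ Subtype.val_injective
  exact this

variable (comulX : X →ₗ[ℂ] H ⊗[ℂ] X)

theorem aux_comulX_mul (hcomulX : ∀ a : X,
      (TensorProduct.map (LinearMap.id) X.val.toLinearMap) (comulX a)
        = Coalgebra.comul (R := ℂ) (a : H)) (a b : X) :
    comulX (a * b) = comulX a * comulX b := by
  apply auxι_inj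
  rw [map_mul (auxι X)]
  simp only [auxι_eq, hcomulX]
  simp

theorem aux_comulX_one (hcomulX : ∀ a : X,
      (TensorProduct.map (LinearMap.id) X.val.toLinearMap) (comulX a)
        = Coalgebra.comul (R := ℂ) (a : H)) :
    comulX 1 = (1 : H) ⊗ₜ[ℂ] (1 : X) := by
  apply auxι_inj
  rw [auxι_eq, hcomulX, auxι_tmul]
  simp [Algebra.TensorProduct.one_def]

theorem aux_coassoc (hcomulX : ∀ a : X,
      (TensorProduct.map (LinearMap.id) X.val.toLinearMap) (comulX a)
        = Coalgebra.comul (R := ℂ) (a : H)) (a : X) :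
    TensorProduct.assoc ℂ H H X
      ((Coalgebra.comul (R := ℂ) (A := H)).rTensor X (comulX a)) = comulX.lTensor H (comulX a) := by
  have inj : Function.Injective ((X.val.toLinearMap.lTensor H).lTensor H) :=
    Module.Flat.lTensor_preserves_injective_linearMap _
      (Module.Flat.lTensor_preserves_injective_linearMap _ Subtype.val_injective)
  apply inj
  have h1 : ∀ z : H ⊗[ℂ] X, (X.val.toLinearMap.lTensor H).lTensor H (comulX.lTensor H z) =
      (Coalgebra.comul (R := ℂ) (A := H)).lTensor H (X.val.toLinearMap.lTensor H z) := by
    intro z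
    induction z using TensorProduct.induction_on with
    | zero => simp
    | add x y hx hy => simp only [map_add, hx, hy]
    | tmul h x =>
      simp only [LinearMap.lTensor_tmul]
      congr 1
      exact hcomulX x
  have h2 : ∀ z : (H ⊗[ℂ] H) ⊗[ℂ] X, (X.val.toLinearMap.lTensor H).lTensor H
      (TensorProduct.assoc ℂ H H X z) =
      TensorProduct.assoc ℂ H H H (X.val.toLinearMap.lTensor (H ⊗[ℂ] H) z) := by
    intro z
    induction z using TensorProduct.induction_on with
    | zero => simp
    | add x y hx hy => simp only [map_add, hx, hy]
    | tmul w x =>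
      induction w using TensorProduct.induction_on with
      | zero => simp
      | add x y hx hy => simp only [map_add, TensorProduct.add_tmul, hx, hy]
      | tmul p q => simp
  have h3 : ∀ z : H ⊗[ℂ] X, X.val.toLinearMap.lTensor (H ⊗[ℂ] H)
      ((Coalgebra.comul (R := ℂ) (A := H)).rTensor X z) =
      (Coalgebra.comul (R := ℂ) (A := H)).rTensor H (X.val.toLinearMap.lTensor H z) := by
    intro z
    induction z using TensorProduct.induction_on with
    | zero => simp
    | add x y hx hy => simp only [map_add, hx, hy]
    | tmul h x => simp
  have h4 : X.val.toLinearMap.lTensor H (comulX a) = Coalgebra.comul (R := ℂ) (a : H) := hcomulX a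
  rw [h1, h2, h3, h4, Coalgebra.coassoc_apply]

/-- `a ↦ a₁ φ(a₂)` -/
noncomputable def auxD (φ : X →ₗ[ℂ] ℂ) : X →ₗ[ℂ] H := auxL φ ∘ₗ comulX

theorem auxD_apply (φ : X →ₗ[ℂ] ℂ) (a : X) {ι : Type} [Fintype ι] (a1 : ι → H) (a2 : ι → X)
    (h : comulX a = ∑ t, a1 t ⊗ₜ[ℂ] a2 t) : auxD comulX φ a = ∑ t, φ (a2 t) • a1 t := by
  simp [auxD, h, auxL_tmul]

theorem auxD_comul (hcomulX : ∀ a : X,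
      (TensorProduct.map (LinearMap.id) X.val.toLinearMap) (comulX a)
        = Coalgebra.comul (R := ℂ) (a : H)) (φ : X →ₗ[ℂ] ℂ) (a : X) :
    Coalgebra.comul (R := ℂ) (auxD comulX φ a) = (auxD comulX φ).lTensor H (comulX a) := by
  have h1 : ∀ z : H ⊗[ℂ] X, Coalgebra.comul (R := ℂ) (auxL φ z) = (auxL φ).lTensor H
      (TensorProduct.assoc ℂ H H X ((Coalgebra.comul (R := ℂ) (A := H)).rTensor X z)) := by
    intro z
    induction z using TensorProduct.induction_on with
    | zero => simp
    | add x y hx hy => simp only [map_add, hx, hy]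
    | tmul h x =>
      rw [auxL_tmul, map_smul, LinearMap.rTensor_tmul]
      generalize Coalgebra.comul (R := ℂ) h = w
      induction w using TensorProduct.induction_on with
      | zero => simp
      | add x y hx hy => simp only [map_add, TensorProduct.add_tmul, smul_add, hx, hy]
      | tmul p q => simp [auxL_tmul]
  rw [auxD, LinearMap.comp_apply, h1, aux_coassoc comulX hcomulX, LinearMap.lTensor_comp_apply]

theorem auxD_mul (hcomulX : ∀ a : X,
      (TensorProduct.map (LinearMap.id) X.val.toLinearMap) (comulX a)
        = Coalgebra.comul (R := ℂ) (a : H)) {J : Type} [Fintype J] (φ : X →ₗ[ℂ] ℂ)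
    (α β : J → X →ₗ[ℂ] ℂ) (h : ∀ x y, φ (x * y) = ∑ j, α j x * β j y) (a c : X) :
    auxD comulX φ (a * c) = ∑ j, auxD comulX (α j) a * auxD comulX (β j) c := by
  simp only [auxD, LinearMap.comp_apply]
  rw [aux_comulX_mul comulX hcomulX]
  generalize comulX a = z
  generalize comulX c = w
  induction z using TensorProduct.induction_on with
  | zero => simp
  | add x y hx hy => simp only [map_add, add_mul, hx, hy, Finset.sum_add_distrib]
  | tmul p x =>
    induction w using TensorProduct.induction_on with
    | zero => simp
    | add x y hx hy => simp only [map_add, mul_add, hx, hy, Finset.sum_add_distrib]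
    | tmul q y =>
      simp only [Algebra.TensorProduct.tmul_mul_tmul, auxL_tmul, h, Finset.sum_smul,
        smul_mul_smul_comm]

theorem auxD_counit (hcomulX : ∀ a : X,
      (TensorProduct.map (LinearMap.id) X.val.toLinearMap) (comulX a)
        = Coalgebra.comul (R := ℂ) (a : H)) (a : X) :
    auxD comulX ((Coalgebra.counit (R := ℂ) (A := H)) ∘ₗ X.val.toLinearMap) a = (a : H) := by
  have h : ∀ z : H ⊗[ℂ] X,
      auxL ((Coalgebra.counit (R := ℂ) (A := H)) ∘ₗ X.val.toLinearMap) z =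
      TensorProduct.rid ℂ H ((Coalgebra.counit (R := ℂ) (A := H)).lTensor H
        (TensorProduct.map (LinearMap.id) X.val.toLinearMap z)) := by
    intro z
    induction z using TensorProduct.induction_on with
    | zero => simp
    | add x y hx hy => simp only [map_add, hx, hy]
    | tmul p x => simp [auxL_tmul]
  rw [auxD, LinearMap.comp_apply, h, hcomulX, Coalgebra.lTensor_counit_comul]
  simp

end aux2

section aux3
variable {H : Type} [Ring H] [HopfAlgebra ℂ H] {M : ℕ} {X : Subalgebra ℂ H}

theorem aux_construct (comulX : X →ₗ[ℂ] H ⊗[ℂ] X)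
    (hmul : ∀ a b, comulX (a * b) = comulX a * comulX b)
    (e : Fin M → X) (π : Fin M → Fin M → H)
    (D : Fin M → X →ₗ[ℂ] X) (Φ : X → Matrix (Fin M) (Fin M) X)
    (hadd : ∀ a b, Φ (a + b) = Φ a + Φ b) (hΦmul : ∀ a b, Φ (a * b) = Φ a * Φ b)
    (hone : Φ 1 = 1)
    (hL : ∀ a b i, D i (a * b) = a * D i b + ∑ j, D j a * Φ b j i)
    (hde : ∀ l i, D i (e l) = if l = i then 1 else 0)
    (hcov : ∀ b l, ∑ i, comulX (D i b) * (π i l ⊗ₜ[ℂ] 1) = (D l).lTensor H (comulX b)) :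
    ∃ c : CovCalc X comulX e, ∀ (a : X) (co : Fin M → X),
      c.d a = ∑ i, co i • c.d (e i) → ∀ i, co i = D i a := by
  have hzero : Φ 0 = 0 := by
    have := hadd 0 0
    simpa using this
  let modR : Module Xᵐᵒᵖ (Fin M → X) :=
    { smul := fun c v => Matrix.vecMul v (Φ c.unop)
      one_smul := fun v => by
        change Matrix.vecMul v (Φ 1) = v
        rw [hone, Matrix.vecMul_one]
      mul_smul := fun c c' v => by
        change Matrix.vecMul v (Φ (c'.unop * c.unop)) =
          Matrix.vecMul (Matrix.vecMul v (Φ c'.unop)) (Φ c.unop)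
        rw [hΦmul, Matrix.vecMul_vecMul]
      smul_zero := fun c => Matrix.zero_vecMul _
      smul_add := fun c v w => Matrix.add_vecMul _ _ _
      add_smul := fun c c' v => by
        change Matrix.vecMul v (Φ (c.unop + c'.unop)) = 
          Matrix.vecMul v (Φ c.unop) + Matrix.vecMul v (Φ c'.unop)
        rw [hadd, Matrix.vecMul_add]
      zero_smul := fun v => by
        change Matrix.vecMul v (Φ 0) = 0
        rw [hzero, Matrix.vecMul_zero] }
  have comm : @SMulCommClass X Xᵐᵒᵖ (Fin M → X) _ modR.toDistribMulAction.toSMul :=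
    @SMulCommClass.mk X Xᵐᵒᵖ (Fin M → X) _ modR.toDistribMulAction.toSMul
      fun a c v => (Matrix.smul_vecMul a v (Φ c.unop)).symm
  let d : X →ₗ[ℂ] (Fin M → X) := LinearMap.pi D
  have hd : ∀ a i, d a i = D i a := fun a i => rfl
  have hdsum : ∀ co : Fin M → X, ∑ i, co i • d (e i) = co := by
    intro co
    ext1 j
    rw [Finset.sum_apply]
    simp [hd, hde]
  let ΔΓ : (Fin M → X) →ₗ[ℂ] H ⊗[ℂ] (Fin M → X) :=
    ∑ i, ∑ j, (LinearMap.single ℂ (fun _ : Fin M => X) j).lTensor H ∘ₗ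
      LinearMap.mulRight ℂ (π i j ⊗ₜ[ℂ] (1 : X)) ∘ₗ comulX ∘ₗ LinearMap.proj i
  refine ⟨@CovCalc.mk H _ _ X comulX M e (Fin M → X) _ _ _ modR comm _ d ?_ ?_ ?_ ?_, ?_⟩
  · intro a b
    ext1 i
    exact hL a b i
  · rw [eq_top_iff]
    rintro v -
    rw [← hdsum v]
    exact Submodule.sum_mem _ fun i _ => Submodule.subset_span ⟨_, _, rfl⟩
  · intro v
    refine ⟨v, (hdsum v).symm, ?_⟩
    intro w hw
    rw [hdsum w] at hw
    exact hw.symm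
  · refine ⟨ΔΓ, ?_⟩
    intro a b ι κ _ _ a1 a2 b1 b2 ha hb
    have h1 : ΔΓ (a • d b) = ∑ j, (LinearMap.single ℂ (fun _ : Fin M => X) j).lTensor H
        (comulX a * (D j).lTensor H (comulX b)) := by
      simp only [ΔΓ, LinearMap.sum_apply, LinearMap.comp_apply]
      rw [Finset.sum_comm]
      refine Finset.sum_congr rfl fun j _ => ?_
      rw [← hcov, Finset.mul_sum, map_sum]
      refine Finset.sum_congr rfl fun i _ => ?_
      simp [hd, hmul, mul_assoc]
    rw [h1, ha, hb]
    simp only [map_sum, Finset.sum_mul, Finset.mul_sum, LinearMap.lTensor_tmul,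
      Algebra.TensorProduct.tmul_mul_tmul]
    rw [Finset.sum_comm]
    conv_rhs => rw [Finset.sum_comm]
    refine Finset.sum_congr rfl fun s _ => ?_
    rw [Finset.sum_comm]
    refine Finset.sum_congr rfl fun t _ => ?_
    rw [← TensorProduct.tmul_sum]
    congr 1
    ext1 j
    rw [Finset.sum_apply]
    simp [hd, Pi.single_apply]
  · intro a co h i
    have h' : d a = ∑ i, co i • d (e i) := h
    rw [hdsum] at h'
    rw [← h', hd]

theorem aux_unique (comulX : X →ₗ[ℂ] H ⊗[ℂ] X) (e : Fin M → X) (c c' : CovCalc X comulX e)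
    (h : ∀ (a : X) (co co' : Fin M → X), c.d a = ∑ i, co i • c.d (e i) →
      c'.d a = ∑ i, co' i • c'.d (e i) → co = co') : c.Iso c' := by
  have tower : ∀ (c : CovCalc X comulX e) (z : ℂ) (x : c.Γ), z • x = (z • (1 : X)) • x := by
    intro c z x
    rw [smul_assoc, one_smul]
  have key : ∀ c : CovCalc X comulX e, ∃ f : (Fin M → X) ≃ₗ[ℂ] c.Γ,
      (∀ v, f v = ∑ i, v i • c.d (e i)) := by
    intro c
    let g : (Fin M → X) →ₗ[ℂ] c.Γ :=
      { toFun := fun v => ∑ i, v i • c.d (e i)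
        map_add' := fun v w => by simp [add_smul, Finset.sum_add_distrib]
        map_smul' := fun z v => by
          simp only [Pi.smul_apply, RingHom.id_apply, Finset.smul_sum, smul_assoc] }
    refine ⟨LinearEquiv.ofBijective g ⟨?_, ?_⟩, fun v => rfl⟩
    · intro v w hvw
      exact (c.free (g v)).unique rfl hvw
    · intro ω
      obtain ⟨v, hv, -⟩ := c.free ω
      exact ⟨v, hv.symm⟩
  obtain ⟨f, hf⟩ := key c
  obtain ⟨f', hf'⟩ := key c'
  have hX : ∀ (a : X) v, f (a • v) = a • f v := by
    intro a v
    simp [hf, Finset.smul_sum, mul_smul]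
  have hX' : ∀ (a : X) v, f' (a • v) = a • f' v := by
    intro a v
    simp [hf', Finset.smul_sum, mul_smul]
  have hd : ∀ a, (f.symm.trans f') (c.d a) = c'.d a := by
    intro a
    have : f.symm (c.d a) = f'.symm (c'.d a) := by
      apply h a
      · rw [← hf, f.apply_symm_apply]
      · rw [← hf', f'.apply_symm_apply]
    simp [this]
  have hl : ∀ (a : X) (x : c.Γ), (f.symm.trans f') (a • x) = a • (f.symm.trans f') x := by
    intro a x
    obtain ⟨v, rfl⟩ := f.surjective x
    rw [← hX]
    simp [hX']
  refine ⟨f.symm.trans f', hd, hl, ?_⟩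
  intro b x
  have hop : ∀ (c : CovCalc X comulX e) (i : Fin M),
      op b • c.d (e i) = c.d (e i * b) - e i • c.d b := by
    intro c i
    rw [c.leibniz, add_sub_cancel_left]
  obtain ⟨v, rfl⟩ := f.surjective x
  have h1 : (f.symm.trans f') (f v) = ∑ i, v i • c'.d (e i) := by simp [hf']
  rw [h1, hf, Finset.smul_sum, Finset.smul_sum, map_sum]
  refine Finset.sum_congr rfl fun i _ => ?_
  rw [← smul_comm (v i) (op b) (c.d (e i)), ← smul_comm (v i) (op b) (c'.d (e i)), hop, hop, hl, map_sub, hl, hd, hd]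

end aux3

/-- construction theorem: under the hypotheses there exists, uniquely up
to isomorphism, a covariant free first order differential calculus on `X` with
`d a = ∂_i(a) d e^i`, `∂_i(a) = a₍₁₎ χ^k(a₍₂₎) (χ⁻¹)_{jk} S(π^j_i)`. -/
theorem stmt15
    {H : Type} [Ring H] [HopfAlgebra ℂ H]
    -- universal r-form
    (r : H →ₗ[ℂ] H →ₗ[ℂ] ℂ)
    (hr1 : ∀ (a b : H) (ι κ : Type) (_ : Fintype ι) (_ : Fintype κ)
      (a1 a2 : ι → H) (b1 b2 : κ → H),
      Coalgebra.comul (R := ℂ) a = ∑ t, a1 t ⊗ₜ[ℂ] a2 t →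
      Coalgebra.comul (R := ℂ) b = ∑ s, b1 s ⊗ₜ[ℂ] b2 s →
      ∑ t, ∑ s, r (a1 t) (b1 s) • (a2 t * b2 s)
        = ∑ t, ∑ s, r (a2 t) (b2 s) • (b1 s * a1 t))
    (hr2 : ∀ (a b c : H) (κ : Type) (_ : Fintype κ) (c1 c2 : κ → H),
      Coalgebra.comul (R := ℂ) c = ∑ s, c1 s ⊗ₜ[ℂ] c2 s →
      r (a * b) c = ∑ s, r a (c1 s) * r b (c2 s))
    (hr2' : ∀ c : H, r 1 c = Coalgebra.counit (R := ℂ) c)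
    (hr3 : ∀ (a b c : H) (ι : Type) (_ : Fintype ι) (a1 a2 : ι → H),
      Coalgebra.comul (R := ℂ) a = ∑ t, a1 t ⊗ₜ[ℂ] a2 t →
      r a (b * c) = ∑ t, r (a1 t) c * r (a2 t) b)
    (hr3' : ∀ a : H, r a 1 = Coalgebra.counit (R := ℂ) a)
    -- X: a left coideal subalgebra
    (X : Subalgebra ℂ H)
    (comulX : X →ₗ[ℂ] H ⊗[ℂ] X)
    (hcomulX : ∀ a : X,
      (TensorProduct.map (LinearMap.id) X.val.toLinearMap) (comulX a)
        = Coalgebra.comul (R := ℂ) (a : H))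
    -- invertibility-closure property of X
    (hclosure : ∀ (n : ℕ) (x y : Fin n → Fin n → H),
      (∀ i j, x i j ∈ X) →
      (∀ i j, ∑ k, x i k * y k j = if i = j then (1 : H) else 0) →
      (∀ i j, ∑ k, y i k * x k j = if i = j then (1 : H) else 0) →
      ∀ i j, y i j ∈ X)
    -- e^i and b^i with their matrix coefficients
    {M : ℕ} (e bb : Fin M → X) (π ψ : Fin M → Fin M → H)
    (hπ : ∀ i, comulX (e i) = ∑ j, π i j ⊗ₜ[ℂ] e j)
    (hΔπ : ∀ i j, Coalgebra.comul (R := ℂ) (π i j) = ∑ k, π i k ⊗ₜ[ℂ] π k j)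
    (hεπ : ∀ i j, Coalgebra.counit (R := ℂ) (π i j) = if i = j then 1 else 0)
    (hψ : ∀ i, comulX (bb i) = ∑ j, ψ i j ⊗ₜ[ℂ] bb j)
    (hΔψ : ∀ i j, Coalgebra.comul (R := ℂ) (ψ i j) = ∑ k, ψ i k ⊗ₜ[ℂ] ψ k j)
    (hεψ : ∀ i j, Coalgebra.counit (R := ℂ) (ψ i j) = if i = j then 1 else 0)
    -- covariant algebra endomorphism ν of X
    (ν : X →ₐ[ℂ] X)
    (hν : ∀ a : X, comulX (ν a) = (TensorProduct.map LinearMap.id ν.toLinearMap) (comulX a))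
    -- the functionals χ^i and the invertible matrix χ
    (χ : Fin M → X → ℂ)
    (hχ : ∀ i (a : X), χ i a =
      r ((bb i : H)) ((ν a : H))
        - Coalgebra.counit (R := ℂ) ((bb i : H)) * Coalgebra.counit (R := ℂ) ((a : H)))
    (χinv : Fin M → Fin M → ℂ)
    (hχinv1 : ∀ i j, ∑ k, χ i (e k) * χinv k j = if i = j then 1 else 0)
    (hχinv2 : ∀ i j, ∑ k, χinv i k * χ k (e j) = if i = j then 1 else 0)
    :
    -- `DFormula c`: the coefficients of d are given by the stated formula for ∂_i
    ∀ DFormula : CovCalc X comulX e → Prop,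
    (∀ c, DFormula c ↔
      ∀ (a : X) (co : Fin M → X), c.d a = ∑ i, co i • c.d (e i) →
        ∀ (i : Fin M) (ι : Type) (_ : Fintype ι) (a1 : ι → H) (a2 : ι → X),
          comulX a = ∑ t, a1 t ⊗ₜ[ℂ] a2 t →
          ((co i : H)) = ∑ t, ∑ j, ∑ k, (χ k (a2 t) * χinv j k) •
            (a1 t * HopfAlgebra.antipode (R := ℂ) (π j i))) →
    -- existence and uniqueness up to isomorphism
    (∃ c : CovCalc X comulX e, DFormula c) ∧
    (∀ c c' : CovCalc X comulX e, DFormula c → DFormula c' → c.Iso c') := by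
  intro DFormula hDF
  have hfmul := aux_comulX_mul comulX hcomulX
  have hπmulS := aux_mul_S π hΔπ hεπ
  have hπSmul := aux_S_mul π hΔπ hεπ
  have hπcomulS := aux_comul_S π hΔπ hεπ
  -- linear functionals
  let εL : X →ₗ[ℂ] ℂ := (Coalgebra.counit (R := ℂ) (A := H)) ∘ₗ X.val.toLinearMap
  let fL : Fin M → Fin M → X →ₗ[ℂ] ℂ := fun i j =>
    r (ψ i j) ∘ₗ X.val.toLinearMap ∘ₗ ν.toLinearMap
  let χL : Fin M → X →ₗ[ℂ] ℂ := fun i =>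
    r (bb i : H) ∘ₗ X.val.toLinearMap ∘ₗ ν.toLinearMap - Coalgebra.counit (R := ℂ) (bb i : H) • εL
  have hεL : ∀ a : X, εL a = Coalgebra.counit (R := ℂ) (a : H) := fun a => rfl
  have hfL : ∀ i j (a : X), fL i j a = r (ψ i j) (ν a : H) := fun i j a => rfl
  have hχL : ∀ i a, χL i a = χ i a := by
    intro i a
    rw [hχ]
    rfl
  have hcomulbb : ∀ i, Coalgebra.comul (R := ℂ) (bb i : H) = ∑ j, ψ i j ⊗ₜ[ℂ] (bb j : H) := by
    intro i
    rw [← hcomulX, hψ]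
    simp
  have hbb : ∀ i, ∑ j, Coalgebra.counit (R := ℂ) (bb j : H) • ψ i j = (bb i : H) := by
    intro i
    have h := Coalgebra.lTensor_counit_comul (R := ℂ) (bb i : H)
    rw [hcomulbb] at h
    have h' := congrArg (TensorProduct.rid ℂ H) h
    simpa using h'
  have hχmul : ∀ i (a c : X), χL i (a * c) = ∑ j, χL j a * fL i j c + εL a * χL i c := by
    intro i a c
    have h1 : r (bb i : H) ((ν (a * c) : X) : H) =
        ∑ j, r (ψ i j) (ν c : H) * r (bb j : H) (ν a : H) := by
      rw [map_mul ν]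
      exact hr3 _ _ _ _ _ _ _ (hcomulbb i)
    have h2 : r (bb i : H) (ν c : H) =
        ∑ j, Coalgebra.counit (R := ℂ) (bb j : H) * r (ψ i j) (ν c : H) := by
      conv_lhs => rw [← hbb i]
      simp
    simp only [hχL, hχ, hfL, hεL]
    rw [h1]
    simp only [sub_mul, Finset.sum_sub_distrib]
    rw [mul_sub, h2, Finset.mul_sum]
    have h3 : Coalgebra.counit (R := ℂ) ((a * c : X) : H) =
        Coalgebra.counit (R := ℂ) (a : H) * Coalgebra.counit (R := ℂ) (c : H) := by simp
    rw [h3]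
    have h4 : ∀ j, Coalgebra.counit (R := ℂ) (a : H) *
        (Coalgebra.counit (R := ℂ) (bb j : H) * r (ψ i j) (ν c : H)) =
        Coalgebra.counit (R := ℂ) (bb j : H) * Coalgebra.counit (R := ℂ) (a : H) *
          r (ψ i j) (ν c : H) := fun j => by ring
    have h5 : ∀ j, r (ψ i j) (ν c : H) * r (bb j : H) (ν a : H) =
      r (bb j : H) (ν a : H) * r (ψ i j) (ν c : H) := fun j => mul_comm _ _
    simp only [h4, h5]
    ring
  have hfLmul : ∀ i j (a c : X), fL i j (a * c) = ∑ k, fL k j a * fL i k c := by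
    intro i j a c
    simp only [hfL]
    rw [map_mul ν]
    refine (hr3 _ _ _ _ _ _ _ (hΔψ i j)).trans ?_
    exact Finset.sum_congr rfl fun k _ => mul_comm _ _
  -- the maps to `H`
  let Dm : X → Fin M → H := fun a k => auxD comulX (χL k) a
  let Fm : X → Matrix (Fin M) (Fin M) H := fun a j k => auxD comulX (fL k j) a
  have hDm : ∀ a k, Dm a k = auxD comulX (χL k) a := fun _ _ => rfl
  have hFm : ∀ a j k, Fm a j k = auxD comulX (fL k j) a := fun _ _ _ => rfl
  have hDmul : ∀ a c : X, Dm (a * c) = (a : H) • Dm c + Matrix.vecMul (Dm a) (Fm c) := by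
    intro a c
    ext1 k
    have h := auxD_mul comulX hcomulX (J := Option (Fin M)) (χL k)
      (fun o => o.elim εL χL) (fun o => o.elim (χL k) (fun j => fL k j))
      (by intro x y; rw [hχmul, Fintype.sum_option, add_comm]; rfl) a c
    rw [Fintype.sum_option] at h
    have h2 : auxD comulX εL a = (a : H) := auxD_counit comulX hcomulX a
    simp only [Option.elim, h2] at h
    simp only [Pi.add_apply, Pi.smul_apply, smul_eq_mul, Matrix.vecMul, dotProduct, hDm, hFm]
    exact h
  have hFmul : ∀ a c : X, Fm (a * c) = Fm a * Fm c := by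
    intro a c
    ext j k
    rw [Matrix.mul_apply]
    exact auxD_mul comulX hcomulX (fL k j) (fun l => fL l j) (fun l => fL k l) (hfLmul k j) a c
  have hFone : Fm 1 = 1 := by
    ext j k
    rw [Matrix.one_apply, hFm, auxD, LinearMap.comp_apply, aux_comulX_one comulX hcomulX,
      auxL_tmul, hfL, map_one]
    have := hr3' (ψ k j)
    rw [hεψ] at this
    change r (ψ k j) 1 • (1 : H) = _
    rw [this]
    by_cases hjk : j = k
    · simp [hjk]
    · simp [hjk, Ne.symm hjk]
  have hFadd : ∀ a c : X, Fm (a + c) = Fm a + Fm c := by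
    intro a c
    ext j k
    simp [hFm]
  let f := algebraMap ℂ H
  let Pm : Matrix (Fin M) (Fin M) H := fun i j => π i j
  let Sm : Matrix (Fin M) (Fin M) H := fun i j => HopfAlgebra.antipode ℂ (π i j)
  let Xm : Matrix (Fin M) (Fin M) ℂ := fun m k => χ k (e m)
  let Xi : Matrix (Fin M) (Fin M) ℂ := fun k j => χinv j k
  have hPS : Pm * Sm = 1 := by
    ext i j
    rw [Matrix.mul_apply, Matrix.one_apply]
    exact hπmulS i j
  have hSP : Sm * Pm = 1 := by
    ext i j
    rw [Matrix.mul_apply, Matrix.one_apply]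
    exact hπSmul i j
  have hXX : Xm * Xi = 1 := by
    ext i j
    rw [Matrix.mul_apply, Matrix.one_apply]
    have := hχinv2 j i
    simp only [Xm, Xi, mul_comm, eq_comm] at this ⊢
    exact this
  have hXX' : Xi * Xm = 1 := mul_eq_one_comm.mp hXX
  have hXf : Xm.map f * Xi.map f = 1 := by
    rw [← Matrix.map_mul, hXX, Matrix.map_one f (map_zero f) (map_one f)]
  have hXf' : Xi.map f * Xm.map f = 1 := by
    rw [← Matrix.map_mul, hXX', Matrix.map_one f (map_zero f) (map_one f)]
  let G : Matrix (Fin M) (Fin M) H := Pm * Xm.map f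
  let Gi : Matrix (Fin M) (Fin M) H := Xi.map f * Sm
  have hGG : G * Gi = 1 := by
    change Pm * Xm.map f * (Xi.map f * Sm) = 1
    rw [mul_assoc, ← mul_assoc (Xm.map f), hXf, one_mul, hPS]
  have hGG' : Gi * G = 1 := by
    change Xi.map f * Sm * (Pm * Xm.map f) = 1
    rw [mul_assoc, ← mul_assoc Sm, hSP, one_mul, hXf']
  have hGi : ∀ k i, Gi k i = ∑ j, χinv j k • HopfAlgebra.antipode ℂ (π j i) := by
    intro k i
    change (Xi.map f * Sm) k i = _
    rw [Matrix.mul_apply]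
    exact Finset.sum_congr rfl fun j _ => (Algebra.smul_def _ _).symm
  have hG : ∀ l, Dm (e l) = G l := by
    intro l
    ext1 k
    rw [hDm, auxD_apply comulX (χL k) (e l) _ _ (hπ l)]
    change _ = (Pm * Xm.map f) l k
    rw [Matrix.mul_apply]
    refine Finset.sum_congr rfl fun m _ => ?_
    rw [hχL, Algebra.smul_def, Algebra.commutes]
    rfl
  clear_value G Gi
  let dH : X → Fin M → H := fun a => Matrix.vecMul (Dm a) Gi
  -- the coefficients lie in `X`
  obtain ⟨V, hTV, hVT⟩ := aux_transpose_inv r hr1 hr3 hr3' ψ hΔψ hεψ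
  set T : Matrix (Fin M) (Fin M) H := Matrix.of fun j k => ψ k j with hT
  have hE : ∀ a k, Matrix.vecMul (Dm a) T k ∈ X := by
    intro a k
    obtain ⟨S, hS⟩ := TensorProduct.exists_finset (comulX a)
    have hS' : comulX a = ∑ t : S, t.1.1 ⊗ₜ[ℂ] t.1.2 := by
      rw [hS]
      exact (Finset.sum_coe_sort S (fun t => t.1 ⊗ₜ[ℂ] t.2)).symm
    have hνa : Coalgebra.comul (R := ℂ) (ν a : H) = ∑ t : S, t.1.1 ⊗ₜ[ℂ] ((ν t.1.2 : X) : H) := by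
      rw [← hcomulX, hν, hS']
      simp
    have h := hr1 (bb k : H) (ν a : H) _ _ _ _ _ _ _ _ (hcomulbb k) hνa
    have h2 : Matrix.vecMul (Dm a) T k =
        ∑ j, ∑ t : S, r (ψ k j) t.1.1 • ((bb j : H) * ((ν t.1.2 : X) : H)) - (a : H) * bb k := by
      rw [h, ← hbb k]
      have h3 : ∀ j, Dm a j = ∑ t : S, r (bb j : H) ((ν t.1.2 : X) : H) • t.1.1 -
          Coalgebra.counit (R := ℂ) (bb j : H) • (a : H) := by
        intro j
        have h4 : (a : H) = ∑ t : S, εL t.1.2 • t.1.1 := by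
          rw [← auxD_apply comulX εL a _ _ hS']
          exact (auxD_counit comulX hcomulX a).symm
        rw [hDm, auxD_apply comulX (χL j) a _ _ hS', h4, Finset.smul_sum,
          ← Finset.sum_sub_distrib]
        refine Finset.sum_congr rfl fun t _ => ?_
        rw [hχL, hχ, hεL, sub_smul, mul_smul]
      simp only [Matrix.vecMul, dotProduct, hT, Matrix.of_apply, h3, sub_mul,
        Finset.sum_sub_distrib, Finset.sum_mul, Finset.mul_sum, smul_mul_assoc, mul_smul_comm]
    rw [h2]
    refine X.sub_mem (X.sum_mem fun j _ => X.sum_mem fun t _ => ?_) (X.mul_mem a.2 (bb k).2)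
    exact X.smul_mem (X.mul_mem (bb j).2 (ν t.1.2).2) _
  have hGT : ∀ i j, (V * Gi) i j ∈ X := by
    refine hclosure M (G * T) (V * Gi) ?_ ?_ ?_
    · intro l k
      have := hE (e l) k
      rw [hG] at this
      exact this
    · intro i j
      have : G * T * (V * Gi) = 1 := by
        rw [mul_assoc, ← mul_assoc T, hTV, one_mul, hGG]
      have := congrFun (congrFun this i) j
      rwa [Matrix.mul_apply, Matrix.one_apply] at this
    · intro i j
      have : V * Gi * (G * T) = 1 := by
        rw [mul_assoc, ← mul_assoc Gi, hGG', one_mul, hVT]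
      have := congrFun (congrFun this i) j
      rwa [Matrix.mul_apply, Matrix.one_apply] at this
  have hdX : ∀ a i, dH a i ∈ X := by
    intro a i
    have : dH a = Matrix.vecMul (Matrix.vecMul (Dm a) T) (V * Gi) := by
      rw [Matrix.vecMul_vecMul, ← mul_assoc, hTV, one_mul]
    rw [this]
    change ∑ j, Matrix.vecMul (Dm a) T j * (V * Gi) j i ∈ X
    exact X.sum_mem fun j _ => X.mul_mem (hE a j) (hGT j i)
  let ΦH : X → Matrix (Fin M) (Fin M) H := fun c => G * Fm c * Gi
  have hdmul : ∀ a c, dH (a * c) = (a : H) • dH c + Matrix.vecMul (dH a) (ΦH c) := by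
    intro a c
    simp only [dH, ΦH, hDmul, Matrix.add_vecMul, Matrix.smul_vecMul, Matrix.vecMul_vecMul]
    rw [mul_assoc G, ← mul_assoc Gi, hGG', one_mul]
  have hde : ∀ l i, dH (e l) i = if l = i then 1 else 0 := by
    intro l i
    have : dH (e l) i = (G * Gi) l i := by
      simp only [dH, hG]
      rfl
    rw [this, hGG, Matrix.one_apply]
  have hΦX : ∀ c l i, ΦH c l i ∈ X := by
    intro c l i
    have h := congrFun (hdmul (e l) c) i
    have h2 : Matrix.vecMul (dH (e l)) (ΦH c) i = ΦH c l i := by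
      simp [Matrix.vecMul, dotProduct, hde]
    rw [Pi.add_apply, h2] at h
    have h3 : ΦH c l i = dH (e l * c) i - (e l : H) * dH c i := by
      rw [h]
      simp
    rw [h3]
    exact X.sub_mem (hdX _ _) (X.mul_mem (e l).2 (hdX _ _))
  -- descend to `X`
  let D : Fin M → X →ₗ[ℂ] X := fun i =>
    { toFun := fun a => ⟨dH a i, hdX a i⟩
      map_add' := fun a c => Subtype.ext (by
        simp [dH, Matrix.vecMul, dotProduct, hDm, add_mul, Finset.sum_add_distrib])
      map_smul' := fun z c => Subtype.ext (by
        simp [dH, Matrix.vecMul, dotProduct, hDm, Finset.smul_sum]) }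
  have hD : ∀ i a, (D i a : H) = dH a i := fun _ _ => rfl
  let Φ : X → Matrix (Fin M) (Fin M) X := fun c l i => ⟨ΦH c l i, hΦX c l i⟩
  have hΦ : ∀ c l i, (Φ c l i : H) = ΦH c l i := fun _ _ _ => rfl
  have hcoeff : ∀ (a : X) (i : Fin M) (ι : Type) (_ : Fintype ι) (a1 : ι → H) (a2 : ι → X),
      comulX a = ∑ t, a1 t ⊗ₜ[ℂ] a2 t →
      dH a i = ∑ t, ∑ j, ∑ k, (χ k (a2 t) * χinv j k) •
            (a1 t * HopfAlgebra.antipode (R := ℂ) (π j i)) := by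
    intro a i ι _ a1 a2 ha
    simp only [dH, Matrix.vecMul, dotProduct, hGi, hDm,
      auxD_apply comulX _ a _ _ ha, hχL, Finset.sum_mul, Finset.mul_sum, smul_mul_smul_comm]
    conv_rhs => enter [2, t]; rw [Finset.sum_comm]
    conv_rhs => rw [Finset.sum_comm]
    exact Finset.sum_congr rfl fun k _ => Finset.sum_comm
  constructor
  · refine Exists.elim (aux_construct comulX hfmul e π D Φ ?_ ?_ ?_ ?_ ?_ ?_) ?_
    rotate_left 6
    · intro c hc
      refine ⟨c, (hDF c).2 ?_⟩
      intro a co hco i ι _ a1 a2 ha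
      rw [hc a co hco i, hD]
      exact hcoeff a i ι _ a1 a2 ha
    · intro a b
      ext i j
      simp [hΦ, ΦH, hFadd, mul_add, add_mul]
    · intro a b
      ext i j
      have : ΦH (a * b) = ΦH a * ΦH b := by
        simp only [ΦH, hFmul]
        simp only [mul_assoc]
        rw [← mul_assoc Gi, hGG', one_mul]
      rw [hΦ, this, Matrix.mul_apply, Matrix.mul_apply]
      simp [hΦ]
    · ext i j
      have : ΦH 1 = 1 := by simp only [ΦH, hFone, mul_one, hGG]
      rw [hΦ, this, Matrix.one_apply, Matrix.one_apply]
      split_ifs <;> rfl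
    · intro a b i
      apply Subtype.ext
      have := congrFun (hdmul a b) i
      simp only [Pi.add_apply, Pi.smul_apply, smul_eq_mul, Matrix.vecMul, dotProduct] at this
      simp [hD, hΦ, this]
    · intro l i
      apply Subtype.ext
      rw [hD, hde]
      split_ifs <;> rfl
    · intro b l
      apply auxι_inj
      rw [map_sum]
      have h1 : ∀ i, auxι X (comulX (D i b)) = ∑ k, ∑ m, Coalgebra.comul (R := ℂ) (Dm b k) *
          (HopfAlgebra.antipode ℂ (π m i) ⊗ₜ[ℂ] Gi k m) := by
        intro i
        rw [auxι_eq, hcomulX, hD]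
        simp only [dH, Matrix.vecMul, dotProduct, map_sum, Bialgebra.comul_mul]
        refine Finset.sum_congr rfl fun k _ => ?_
        rw [← Finset.mul_sum]
        congr 1
        simp only [hGi, map_sum, map_smul, hπcomulS, TensorProduct.tmul_sum,
          TensorProduct.tmul_smul, Finset.smul_sum]
        rw [Finset.sum_comm]
      have h2 : ∀ i, auxι X (comulX (D i b) * (π i l ⊗ₜ[ℂ] 1)) =
          ∑ k, ∑ m, Coalgebra.comul (R := ℂ) (Dm b k) *
          ((HopfAlgebra.antipode ℂ (π m i) * π i l) ⊗ₜ[ℂ] Gi k m) := by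
        intro i
        rw [map_mul (auxι X), h1, auxι_tmul]
        simp only [Finset.sum_mul, mul_assoc, Algebra.TensorProduct.tmul_mul_tmul]
        simp
      simp only [h2]
      rw [Finset.sum_comm]
      have h3 : ∀ k, ∑ i, ∑ m, Coalgebra.comul (R := ℂ) (Dm b k) *
          ((HopfAlgebra.antipode ℂ (π m i) * π i l) ⊗ₜ[ℂ] Gi k m) =
          (auxD comulX (χL k)).lTensor H (comulX b) * ((1 : H) ⊗ₜ[ℂ] Gi k l) := by
        intro k
        rw [Finset.sum_comm]
        simp only [← Finset.mul_sum, ← TensorProduct.sum_tmul, hπSmul]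
        rw [hDm, auxD_comul comulX hcomulX]
        congr 1
        rw [Finset.sum_eq_single l]
        · simp
        · intro m _ hm
          simp [hm]
        · simp
      simp only [h3]
      generalize comulX b = z
      induction z using TensorProduct.induction_on with
      | zero => simp
      | add x y hx hy => simp only [map_add, add_mul, Finset.sum_add_distrib, hx, hy]
      | tmul p x =>
        simp only [LinearMap.lTensor_tmul, Algebra.TensorProduct.tmul_mul_tmul, mul_one,
          auxι_tmul, hD, dH, Matrix.vecMul, dotProduct, TensorProduct.tmul_sum, hDm]
  · intro c c' hc hc'
    apply aux_unique
    intro a co co' h h'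
    rw [hDF] at hc hc'
    obtain ⟨S, hS⟩ := TensorProduct.exists_finset (comulX a)
    have hS' : comulX a = ∑ t : S, t.1.1 ⊗ₜ[ℂ] t.1.2 := by
      rw [hS]
      exact (Finset.sum_coe_sort S (fun t => t.1 ⊗ₜ[ℂ] t.2)).symm
    ext i
    rw [hc a co h i _ _ _ _ hS', hc' a co' h' i _ _ _ _ hS']
end

section
/- The calculus produced by the construction theorem is inner: d a = ω a − a ω for all a ∈ X, where ω = Σ_i ω_i d e^i with ω_i = ε(b^k) (χ^{-1})_{jk} S(π^j_i), and moreover each ω_i lies in X. -/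
open TensorProduct MulOpposite

section helpers
variable {H : Type} [Ring H] [HopfAlgebra ℂ H] {M : ℕ}

lemma antip_right (a : H) {ι : Type} [Fintype ι] (a1 a2 : ι → H)
    (h : Coalgebra.comul (R := ℂ) a = ∑ t, a1 t ⊗ₜ[ℂ] a2 t) :
    ∑ t, a1 t * HopfAlgebra.antipode ℂ (a2 t) = algebraMap ℂ H (Coalgebra.counit (R := ℂ) a) := by
  rw [← HopfAlgebra.mul_antipode_lTensor_comul_apply, h]
  simp [map_sum]

lemma antip_left (a : H) {ι : Type} [Fintype ι] (a1 a2 : ι → H)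
    (h : Coalgebra.comul (R := ℂ) a = ∑ t, a1 t ⊗ₜ[ℂ] a2 t) :
    ∑ t, HopfAlgebra.antipode ℂ (a1 t) * a2 t = algebraMap ℂ H (Coalgebra.counit (R := ℂ) a) := by
  rw [← HopfAlgebra.mul_antipode_rTensor_comul_apply, h]
  simp [map_sum]

lemma counit_right (a : H) {ι : Type} [Fintype ι] (a1 a2 : ι → H)
    (h : Coalgebra.comul (R := ℂ) a = ∑ t, a1 t ⊗ₜ[ℂ] a2 t) :
    ∑ t, Coalgebra.counit (R := ℂ) (a2 t) • a1 t = a := by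
  have := congrArg (TensorProduct.rid ℂ H) (Coalgebra.lTensor_counit_comul (R := ℂ) a)
  rw [h] at this
  simpa [map_sum] using this

lemma mat_right (ψ : Fin M → Fin M → H)
    (hΔψ : ∀ i j, Coalgebra.comul (R := ℂ) (ψ i j) = ∑ k, ψ i k ⊗ₜ[ℂ] ψ k j)
    (hεψ : ∀ i j, Coalgebra.counit (R := ℂ) (ψ i j) = if i = j then 1 else 0) (i j : Fin M) :
    ∑ p, ψ i p * HopfAlgebra.antipode ℂ (ψ p j) = if i = j then 1 else 0 := by
  rw [antip_right _ _ _ (hΔψ i j), hεψ]; split_ifs <;> simp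

lemma mat_left (ψ : Fin M → Fin M → H)
    (hΔψ : ∀ i j, Coalgebra.comul (R := ℂ) (ψ i j) = ∑ k, ψ i k ⊗ₜ[ℂ] ψ k j)
    (hεψ : ∀ i j, Coalgebra.counit (R := ℂ) (ψ i j) = if i = j then 1 else 0) (i j : Fin M) :
    ∑ p, HopfAlgebra.antipode ℂ (ψ i p) * ψ p j = if i = j then 1 else 0 := by
  rw [antip_left _ _ _ (hΔψ i j), hεψ]; split_ifs <;> simp

lemma comul_antip (ψ : Fin M → Fin M → H)
    (hΔψ : ∀ i j, Coalgebra.comul (R := ℂ) (ψ i j) = ∑ k, ψ i k ⊗ₜ[ℂ] ψ k j)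
    (hεψ : ∀ i j, Coalgebra.counit (R := ℂ) (ψ i j) = if i = j then 1 else 0) (k l : Fin M) :
    Coalgebra.comul (R := ℂ) (HopfAlgebra.antipode ℂ (ψ k l)) =
      ∑ q, HopfAlgebra.antipode ℂ (ψ q l) ⊗ₜ[ℂ] HopfAlgebra.antipode ℂ (ψ k q) := by
  let s : Fin M → Fin M → H := fun i j => HopfAlgebra.antipode ℂ (ψ i j)
  let U : Matrix (Fin M) (Fin M) (H ⊗[ℂ] H) := fun k l => Coalgebra.comul (R := ℂ) (s k l)
  let P : Matrix (Fin M) (Fin M) (H ⊗[ℂ] H) := fun k l => Coalgebra.comul (R := ℂ) (ψ k l)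
  let V : Matrix (Fin M) (Fin M) (H ⊗[ℂ] H) := fun k l => ∑ q, s q l ⊗ₜ[ℂ] s k q
  have h1 : U * P = 1 := by
    ext i j
    rw [Matrix.mul_apply]
    simp only [U, P, ← Bialgebra.comul_mul, ← map_sum, s]
    rw [mat_left ψ hΔψ hεψ, Matrix.one_apply]
    split_ifs <;> simp
  have h2 : P * V = 1 := by
    ext i j
    rw [Matrix.mul_apply]
    simp only [P, V, hΔψ, Finset.sum_mul_sum, Algebra.TensorProduct.tmul_mul_tmul]
    rw [Finset.sum_comm]
    have : ∀ p q, ∑ l, (ψ i p * s q j) ⊗ₜ[ℂ] (ψ p l * s l q) =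
        if p = q then (ψ i p * s q j) ⊗ₜ[ℂ] (1 : H) else 0 := by
      intro p q
      rw [← TensorProduct.tmul_sum, mat_right ψ hΔψ hεψ]
      split_ifs <;> simp
    calc _ = ∑ p, ∑ q, ∑ l, (ψ i p * s q j) ⊗ₜ[ℂ] (ψ p l * s l q) :=
          Finset.sum_congr rfl fun p _ => Finset.sum_comm
      _ = _ := by
        simp only [this, Finset.sum_ite_eq, Finset.mem_univ, if_true]
        rw [← TensorProduct.sum_tmul, mat_right ψ hΔψ hεψ, Matrix.one_apply]
        split_ifs <;> simp [Algebra.TensorProduct.one_def]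
  have h3 : U = V := left_inv_eq_right_inv h1 h2
  exact congrFun (congrFun h3 k) l

lemma r_sum_left (r : H →ₗ[ℂ] H →ₗ[ℂ] ℂ) {ι : Type} [Fintype ι] (f : ι → H) (b : H) :
    r (∑ t, f t) b = ∑ t, r (f t) b := by
  simp [map_sum]

/-- the transposed matrix `ψᵀ` is invertible over `H` -/
lemma transp_inv (r : H →ₗ[ℂ] H →ₗ[ℂ] ℂ)
    (hr1 : ∀ (a b : H) (ι κ : Type) (_ : Fintype ι) (_ : Fintype κ)
      (a1 a2 : ι → H) (b1 b2 : κ → H),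
      Coalgebra.comul (R := ℂ) a = ∑ t, a1 t ⊗ₜ[ℂ] a2 t →
      Coalgebra.comul (R := ℂ) b = ∑ s, b1 s ⊗ₜ[ℂ] b2 s →
      ∑ t, ∑ s, r (a1 t) (b1 s) • (a2 t * b2 s)
        = ∑ t, ∑ s, r (a2 t) (b2 s) • (b1 s * a1 t))
    (hr3 : ∀ (a b c : H) (ι : Type) (_ : Fintype ι) (a1 a2 : ι → H),
      Coalgebra.comul (R := ℂ) a = ∑ t, a1 t ⊗ₜ[ℂ] a2 t →
      r a (b * c) = ∑ t, r (a1 t) c * r (a2 t) b)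
    (hr3' : ∀ a : H, r a 1 = Coalgebra.counit (R := ℂ) a)
    (ψ : Fin M → Fin M → H)
    (hΔψ : ∀ i j, Coalgebra.comul (R := ℂ) (ψ i j) = ∑ k, ψ i k ⊗ₜ[ℂ] ψ k j)
    (hεψ : ∀ i j, Coalgebra.counit (R := ℂ) (ψ i j) = if i = j then 1 else 0) :
    ∃ Q : Matrix (Fin M) (Fin M) H,
      (Matrix.of ψ).transpose * Q = 1 ∧ Q * (Matrix.of ψ).transpose = 1 := by
  let s : Fin M → Fin M → H := fun i j => HopfAlgebra.antipode ℂ (ψ i j)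
  let t : Fin M → Fin M → H := fun i j => HopfAlgebra.antipode ℂ (s i j)
  have hΔs : ∀ k l, Coalgebra.comul (R := ℂ) (s k l) = ∑ q, s q l ⊗ₜ[ℂ] s k q :=
    comul_antip ψ hΔψ hεψ
  have hεs : ∀ k l, Coalgebra.counit (R := ℂ) (s k l) = if k = l then 1 else 0 := by
    intro k l
    simp only [s, HopfAlgebra.counit_antipode, hεψ]
  have hts : ∀ k l, ∑ q, t q l * s k q = if k = l then 1 else 0 := by
    intro k l
    rw [antip_left _ _ _ (hΔs k l), hεs]; split_ifs <;> simp
  have hst : ∀ k l, ∑ q, s q l * t k q = if k = l then 1 else 0 := by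
    intro k l
    rw [antip_right _ _ _ (hΔs k l), hεs]; split_ifs <;> simp
  let B : Matrix (Fin M) (Fin M) ℂ := fun i l => ∑ p, r (ψ i p) (s p l)
  have hB1 : ∀ i l, algebraMap ℂ H (B i l) = ∑ p, ∑ q, B p q • (s q l * ψ i p) := by
    intro i l
    have h := fun j => hr1 (ψ i j) (s j l) _ _ inferInstance inferInstance _ _ _ _ (hΔψ i j) (hΔs j l)
    have h := Finset.sum_congr (s₁ := Finset.univ) rfl fun j _ => h j
    have e1 : ∑ j, ∑ p, ∑ q, r (ψ i p) (s q l) • (ψ p j * s j q) = algebraMap ℂ H (B i l) := by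
      rw [Finset.sum_comm]
      calc _ = ∑ p, ∑ q, r (ψ i p) (s q l) • ∑ j, (ψ p j * s j q) := by
            refine Finset.sum_congr rfl fun p _ => ?_
            rw [Finset.sum_comm]
            simp only [Finset.smul_sum]
        _ = _ := by
            simp only [s, mat_right ψ hΔψ hεψ]
            simp [B, s, Algebra.algebraMap_eq_smul_one]
    rw [← e1, h, Finset.sum_comm]
    refine Finset.sum_congr rfl fun p _ => ?_
    rw [Finset.sum_comm]
    refine Finset.sum_congr rfl fun q _ => ?_
    simp only [B, Finset.sum_smul]
  -- `ψ B = B t`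
  have hB2 : ∀ i m, ∑ p, B p m • ψ i p = ∑ l, B i l • t l m := by
    intro i m
    symm
    calc ∑ l, B i l • t l m = ∑ l, t l m * algebraMap ℂ H (B i l) := by
          refine Finset.sum_congr rfl fun l _ => ?_
          rw [← Algebra.commutes, Algebra.smul_def]
      _ = ∑ l, ∑ p, ∑ q, B p q • (t l m * s q l * ψ i p) := by
          refine Finset.sum_congr rfl fun l _ => ?_
          rw [hB1]
          simp only [Finset.mul_sum, mul_smul_comm, mul_assoc]
      _ = ∑ p, ∑ q, B p q • ((∑ l, t l m * s q l) * ψ i p) := by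
          rw [Finset.sum_comm]
          refine Finset.sum_congr rfl fun p _ => ?_
          rw [Finset.sum_comm]
          simp only [Finset.smul_sum, Finset.sum_mul]
      _ = _ := by
          simp only [hts]
          simp
  have hrr : ∀ i j k l, ∑ p, ∑ q, r (ψ i p) (ψ q l) * r (ψ p j) (s k q) =
      if i = j then (if k = l then 1 else 0) else 0 := by
    intro i j k l
    rw [Finset.sum_comm]
    calc _ = ∑ q, r (ψ i j) (s k q * ψ q l) := by
          refine Finset.sum_congr rfl fun q _ => ?_
          rw [hr3 _ _ _ _ _ _ _ (hΔψ i j)]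
      _ = r (ψ i j) (∑ q, s k q * ψ q l) := by rw [map_sum]
      _ = _ := by
          simp only [s, mat_left ψ hΔψ hεψ]
          have := hεψ i j
          split_ifs at this ⊢ <;> simp [hr3', this]
  let B' : Matrix (Fin M) (Fin M) ℂ := fun l j => ∑ m, r (t l m) (ψ m j)
  have hBB' : B * B' = 1 := by
    ext i j
    simp only [Matrix.mul_apply]
    calc ∑ l, B i l * B' l j = ∑ l, ∑ m, r (B i l • t l m) (ψ m j) := by
          simp [B', Finset.mul_sum]
      _ = ∑ m, r (∑ l, B i l • t l m) (ψ m j) := by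
          rw [Finset.sum_comm]
          simp only [r_sum_left]
      _ = ∑ m, ∑ n, ∑ p, r (ψ i n) (ψ m j) * r (ψ n p) (s p m) := by
          refine Finset.sum_congr rfl fun m _ => ?_
          rw [← hB2, r_sum_left]
          refine Finset.sum_congr rfl fun n _ => ?_
          simp only [B, map_smul, LinearMap.smul_apply, smul_eq_mul, Finset.sum_mul]
          exact Finset.sum_congr rfl fun p _ => mul_comm _ _
      _ = ∑ p, ∑ n, ∑ m, r (ψ i n) (ψ m j) * r (ψ n p) (s p m) := by
          rw [Finset.sum_comm, Finset.sum_comm (s := (Finset.univ : Finset (Fin M))) (f := fun p n => ∑ m, r (ψ i n) (ψ m j) * r (ψ n p) (s p m))]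
          refine Finset.sum_congr rfl fun n _ => ?_
          rw [Finset.sum_comm]
      _ = _ := by
          simp only [hrr]
          simp [Matrix.one_apply]
  have hB'B : B' * B = 1 := mul_eq_one_comm.mp hBB'
  let C : Matrix (Fin M) (Fin M) H := B.transpose.map (algebraMap ℂ H)
  let C' : Matrix (Fin M) (Fin M) H := B'.transpose.map (algebraMap ℂ H)
  have hCC' : C * C' = 1 := by
    simp only [C, C', ← Matrix.map_mul, ← Matrix.transpose_mul, hB'B]
    simp
  have hC'C : C' * C = 1 := by
    simp only [C, C', ← Matrix.map_mul, ← Matrix.transpose_mul, hBB']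
    simp
  let S : Matrix (Fin M) (Fin M) H := (Matrix.of s).transpose
  let T : Matrix (Fin M) (Fin M) H := (Matrix.of t).transpose
  have hST : S * T = 1 := by
    ext i j
    simp only [S, T, Matrix.mul_apply, Matrix.transpose_apply, Matrix.of_apply, hst,
      Matrix.one_apply, eq_comm]
  have hTS : T * S = 1 := by
    ext i j
    simp only [S, T, Matrix.mul_apply, Matrix.transpose_apply, Matrix.of_apply, hts,
      Matrix.one_apply, eq_comm]
  have hCP : C * (Matrix.of ψ).transpose = T * C := by
    ext m i
    simp only [C, T, Matrix.mul_apply, Matrix.transpose_apply, Matrix.of_apply, Matrix.map_apply]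
    have := hB2 i m
    simp only [Algebra.smul_def] at this
    rw [this]
    exact Finset.sum_congr rfl fun l _ => Algebra.commutes _ _
  have hP : (Matrix.of ψ).transpose = C' * T * C := by
    rw [mul_assoc, ← hCP, ← mul_assoc, hC'C, one_mul]
  refine ⟨C' * S * C, ?_, ?_⟩
  · rw [hP]
    calc _ = C' * (T * ((C * C') * S)) * C := by simp only [mul_assoc]
      _ = 1 := by rw [hCC', one_mul, hTS, mul_one, hC'C]
  · rw [hP]
    calc _ = C' * (S * ((C * C') * T)) * C := by simp only [mul_assoc]
      _ = 1 := by rw [hCC', one_mul, hST, mul_one, hC'C]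

end helpers

/-- the calculus produced by the construction theorem is inner:
`d a = ω a − a ω` with `ω = Σ_i ω_i d e^i`, `ω_i = ε(b^k) (χ⁻¹)_{jk} S(π^j_i)`,
and each `ω_i` lies in `X`. -/
theorem stmt16
    {H : Type} [Ring H] [HopfAlgebra ℂ H]
    -- universal r-form
    (r : H →ₗ[ℂ] H →ₗ[ℂ] ℂ)
    (hr1 : ∀ (a b : H) (ι κ : Type) (_ : Fintype ι) (_ : Fintype κ)
      (a1 a2 : ι → H) (b1 b2 : κ → H),
      Coalgebra.comul (R := ℂ) a = ∑ t, a1 t ⊗ₜ[ℂ] a2 t →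
      Coalgebra.comul (R := ℂ) b = ∑ s, b1 s ⊗ₜ[ℂ] b2 s →
      ∑ t, ∑ s, r (a1 t) (b1 s) • (a2 t * b2 s)
        = ∑ t, ∑ s, r (a2 t) (b2 s) • (b1 s * a1 t))
    (hr2 : ∀ (a b c : H) (κ : Type) (_ : Fintype κ) (c1 c2 : κ → H),
      Coalgebra.comul (R := ℂ) c = ∑ s, c1 s ⊗ₜ[ℂ] c2 s →
      r (a * b) c = ∑ s, r a (c1 s) * r b (c2 s))
    (hr2' : ∀ c : H, r 1 c = Coalgebra.counit (R := ℂ) c)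
    (hr3 : ∀ (a b c : H) (ι : Type) (_ : Fintype ι) (a1 a2 : ι → H),
      Coalgebra.comul (R := ℂ) a = ∑ t, a1 t ⊗ₜ[ℂ] a2 t →
      r a (b * c) = ∑ t, r (a1 t) c * r (a2 t) b)
    (hr3' : ∀ a : H, r a 1 = Coalgebra.counit (R := ℂ) a)
    -- X: a left coideal subalgebra
    (X : Subalgebra ℂ H)
    (comulX : X →ₗ[ℂ] H ⊗[ℂ] X)
    (hcomulX : ∀ a : X,
      (TensorProduct.map (LinearMap.id) X.val.toLinearMap) (comulX a)
        = Coalgebra.comul (R := ℂ) (a : H))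
    -- invertibility-closure property of X
    (hclosure : ∀ (n : ℕ) (x y : Fin n → Fin n → H),
      (∀ i j, x i j ∈ X) →
      (∀ i j, ∑ k, x i k * y k j = if i = j then (1 : H) else 0) →
      (∀ i j, ∑ k, y i k * x k j = if i = j then (1 : H) else 0) →
      ∀ i j, y i j ∈ X)
    -- e^i and b^i with their matrix coefficients
    {M : ℕ} (e bb : Fin M → X) (π ψ : Fin M → Fin M → H)
    (hπ : ∀ i, comulX (e i) = ∑ j, π i j ⊗ₜ[ℂ] e j)
    (hΔπ : ∀ i j, Coalgebra.comul (R := ℂ) (π i j) = ∑ k, π i k ⊗ₜ[ℂ] π k j)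
    (hεπ : ∀ i j, Coalgebra.counit (R := ℂ) (π i j) = if i = j then 1 else 0)
    (hψ : ∀ i, comulX (bb i) = ∑ j, ψ i j ⊗ₜ[ℂ] bb j)
    (hΔψ : ∀ i j, Coalgebra.comul (R := ℂ) (ψ i j) = ∑ k, ψ i k ⊗ₜ[ℂ] ψ k j)
    (hεψ : ∀ i j, Coalgebra.counit (R := ℂ) (ψ i j) = if i = j then 1 else 0)
    -- covariant algebra endomorphism ν of X
    (ν : X →ₐ[ℂ] X)
    (hν : ∀ a : X, comulX (ν a) = (TensorProduct.map LinearMap.id ν.toLinearMap) (comulX a))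
    -- the functionals χ^i and the invertible matrix χ
    (χ : Fin M → X → ℂ)
    (hχ : ∀ i (a : X), χ i a =
      r ((bb i : H)) ((ν a : H))
        - Coalgebra.counit (R := ℂ) ((bb i : H)) * Coalgebra.counit (R := ℂ) ((a : H)))
    (χinv : Fin M → Fin M → ℂ)
    (hχinv1 : ∀ i j, ∑ k, χ i (e k) * χinv k j = if i = j then 1 else 0)
    (hχinv2 : ∀ i j, ∑ k, χinv i k * χ k (e j) = if i = j then 1 else 0)
    -- the constructed calculus: d a = ∂_i(a) d e^i with the formula for ∂_i
    (c : CovCalc X comulX e)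
    (hD : ∀ (a : X) (co : Fin M → X), c.d a = ∑ i, co i • c.d (e i) →
      ∀ (i : Fin M) (ι : Type) (_ : Fintype ι) (a1 : ι → H) (a2 : ι → X),
        comulX a = ∑ t, a1 t ⊗ₜ[ℂ] a2 t →
        ((co i : H)) = ∑ t, ∑ j, ∑ k, (χ k (a2 t) * χinv j k) •
          (a1 t * HopfAlgebra.antipode (R := ℂ) (π j i))) :
    ∃ w : Fin M → X,
      (∀ i, ((w i : H)) = ∑ j, ∑ k,
        (Coalgebra.counit (R := ℂ) ((bb k : H)) * χinv j k) •
          HopfAlgebra.antipode (R := ℂ) (π j i)) ∧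
      (∀ a : X, c.d a =
        op a • (∑ i, w i • c.d (e i)) - a • (∑ i, w i • c.d (e i))) := by

  classical
  -- Sweedler representatives
  have hΔ : ∀ (a : X) (ι : Type) [Fintype ι] (a1 : ι → H) (a2 : ι → X),
      comulX a = ∑ t, a1 t ⊗ₜ[ℂ] a2 t →
      Coalgebra.comul (R := ℂ) (a : H) = ∑ t, a1 t ⊗ₜ[ℂ] ((a2 t : X) : H) := by
    intro a ι _ a1 a2 h
    rw [← hcomulX, h]
    simp [map_sum]
  have hinj : Function.Injective
      (TensorProduct.map (LinearMap.id : H →ₗ[ℂ] H) X.val.toLinearMap) :=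
    Module.Flat.lTensor_preserves_injective_linearMap (M := H) X.val.toLinearMap
      Subtype.val_injective
  have hmul : ∀ (a b : X) (ι κ : Type) [Fintype ι] [Fintype κ] (a1 : ι → H) (a2 : ι → X)
      (b1 : κ → H) (b2 : κ → X),
      comulX a = ∑ t, a1 t ⊗ₜ[ℂ] a2 t → comulX b = ∑ t, b1 t ⊗ₜ[ℂ] b2 t →
      comulX (a * b) = ∑ t : ι × κ, (a1 t.1 * b1 t.2) ⊗ₜ[ℂ] (a2 t.1 * b2 t.2) := by
    intro a b ι κ _ _ a1 a2 b1 b2 ha hb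
    apply hinj
    rw [hcomulX]
    simp only [map_sum, TensorProduct.map_tmul, LinearMap.id_apply, AlgHom.toLinearMap_apply,
      Subalgebra.coe_val, Subalgebra.coe_mul, Bialgebra.comul_mul]
    rw [hΔ a ι a1 a2 ha, hΔ b κ b1 b2 hb, Finset.sum_mul_sum, Fintype.sum_prod_type]
    simp only [Algebra.TensorProduct.tmul_mul_tmul]
  have hbψ : ∀ k, ((bb k : X) : H) = ∑ l, Coalgebra.counit (R := ℂ) ((bb l : X) : H) • ψ k l :=
    fun k => (counit_right _ _ _ (hΔ _ _ _ _ (hψ k))).symm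
  have heπ : ∀ k, ((e k : X) : H) = ∑ l, Coalgebra.counit (R := ℂ) ((e l : X) : H) • π k l :=
    fun k => (counit_right _ _ _ (hΔ _ _ _ _ (hπ k))).symm
  -- r(b^k, ·) in terms of r(ψ, ·)
  have hrb : ∀ k (x : H), r (bb k : H) x =
      ∑ l, Coalgebra.counit (R := ℂ) ((bb l : X) : H) * r (ψ k l) x := by
    intro k x
    rw [hbψ k, r_sum_left]
    simp
  -- twisted Leibniz rule of χ
  have hχmul : ∀ k (a b : X), χ k (a * b) =
      (∑ l, r (ψ k l) (ν b : H) * χ l a) + Coalgebra.counit (R := ℂ) (a : H) * χ k b := by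
    intro k a b
    simp only [hχ, map_mul, Subalgebra.coe_mul, Bialgebra.counit_mul]
    rw [hr3 _ _ _ _ _ _ _ (hΔ _ _ _ _ (hψ k)), hrb k (ν b : H)]
    simp only [mul_sub, Finset.sum_sub_distrib, Finset.mul_sum]
    have : ∀ l, r (ψ k l) (ν b : H) *
        (Coalgebra.counit (R := ℂ) ((bb l : X) : H) * Coalgebra.counit (R := ℂ) (a : H)) =
        Coalgebra.counit (R := ℂ) (a : H) * (Coalgebra.counit (R := ℂ) ((bb l : X) : H) *
        r (ψ k l) (ν b : H)) := fun l => by ring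
    simp only [this]
    ring
  -- ω_i
  let wH : Fin M → H := fun i => ∑ j, ∑ k,
    (Coalgebra.counit (R := ℂ) ((bb k : H)) * χinv j k) • HopfAlgebra.antipode (R := ℂ) (π j i)
  have hwX : ∀ i, wH i ∈ X := by
    obtain ⟨Q, hQ1, hQ2⟩ := transp_inv r hr1 hr3 hr3' ψ hΔψ hεψ
    let P : Matrix (Fin M) (Fin M) H := Matrix.of π
    let SP : Matrix (Fin M) (Fin M) H := Matrix.of fun i j => HopfAlgebra.antipode ℂ (π i j)
    have hP1 : P * SP = 1 := by
      ext i j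
      rw [Matrix.mul_apply, Matrix.one_apply]
      exact mat_right π hΔπ hεπ i j
    have hP2 : SP * P = 1 := by
      ext i j
      rw [Matrix.mul_apply, Matrix.one_apply]
      exact mat_left π hΔπ hεπ i j
    let Z : Matrix (Fin M) (Fin M) ℂ := Matrix.of fun n l => χ l (e n)
    let Z' : Matrix (Fin M) (Fin M) ℂ := Matrix.of fun l j => χinv j l
    have hZ : Z * Z' = 1 := by
      ext i j
      rw [Matrix.mul_apply, Matrix.one_apply]
      simp only [Z, Z', Matrix.of_apply]
      rw [← Finset.sum_congr rfl fun k _ => mul_comm (χinv j k) (χ k (e i)), hχinv2 j i]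
      simp only [eq_comm]
    have hZ' : Z' * Z = 1 := mul_eq_one_comm.mp hZ
    let W : Matrix (Fin M) (Fin M) H := Z.map (algebraMap ℂ H)
    let W' : Matrix (Fin M) (Fin M) H := Z'.map (algebraMap ℂ H)
    have hW1 : W * W' = 1 := by
      simp only [W, W', ← Matrix.map_mul, hZ]
      simp
    have hW2 : W' * W = 1 := by
      simp only [W, W', ← Matrix.map_mul, hZ']
      simp
    let T : Matrix (Fin M) (Fin M) H := (Matrix.of ψ).transpose
    let x : Matrix (Fin M) (Fin M) H := P * W * T
    let y : Matrix (Fin M) (Fin M) H := Q * W' * SP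
    have hxy : x * y = 1 := by
      calc x * y = P * (W * ((T * Q) * W')) * SP := by simp only [x, y, mul_assoc]
        _ = 1 := by rw [hQ1, one_mul, hW1, mul_one, hP1]
    have hyx : y * x = 1 := by
      calc y * x = Q * (W' * ((SP * P) * W)) * T := by simp only [x, y, mul_assoc]
        _ = 1 := by rw [hP2, one_mul, hW2, mul_one, hQ2]
    have hx : ∀ m k, x m k ∈ X := by
      intro m k
      have hν' : comulX (ν (e m)) = ∑ n, π m n ⊗ₜ[ℂ] ν (e n) := by
        rw [hν, hπ]
        simp [map_sum]
      have h := hr1 (bb k : H) (ν (e m) : H) _ _ inferInstance inferInstance _ _ _ _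
        (hΔ _ _ _ _ (hψ k)) (hΔ _ _ _ _ hν')
      have hr : ∀ l n, r (bb l : H) (ν (e n) : H) = χ l (e n) +
          Coalgebra.counit (R := ℂ) ((bb l : X) : H) * Coalgebra.counit (R := ℂ) ((e n : X) : H) := by
        intro l n
        rw [hχ]; ring
      simp only [hr, add_smul, Finset.sum_add_distrib] at h
      have h1 : ∑ l, ∑ n, χ l (e n) • (π m n * ψ k l) = x m k := by
        simp only [x, P, W, T, Z, Matrix.mul_apply, Matrix.transpose_apply, Matrix.of_apply,
          Matrix.map_apply, Finset.sum_mul]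
        refine Finset.sum_congr rfl fun l _ => Finset.sum_congr rfl fun n _ => ?_
        rw [← Algebra.commutes, ← Algebra.smul_def, smul_mul_assoc]
      have h2 : ∑ l, ∑ n, (Coalgebra.counit (R := ℂ) ((bb l : X) : H) *
          Coalgebra.counit (R := ℂ) ((e n : X) : H)) • (π m n * ψ k l) =
          ((e m : X) : H) * ((bb k : X) : H) := by
        rw [hbψ k, heπ m, Finset.sum_mul_sum, Finset.sum_comm]
        refine Finset.sum_congr rfl fun l _ => Finset.sum_congr rfl fun n _ => ?_
        rw [smul_mul_smul_comm, mul_comm]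
      rw [h1, h2] at h
      rw [← sub_eq_iff_eq_add.mpr h]
      refine X.sub_mem (X.sum_mem fun l _ => X.sum_mem fun n _ => X.smul_mem ?_ _) ?_
      · exact X.mul_mem (bb l).2 (ν (e n)).2
      · exact X.mul_mem (e m).2 (bb k).2
    have hy := hclosure M x y hx
      (fun i j => by rw [← Matrix.mul_apply, hxy, Matrix.one_apply])
      (fun i j => by rw [← Matrix.mul_apply, hyx, Matrix.one_apply])
    intro i
    let β : Fin M → H := fun l => algebraMap ℂ H (Coalgebra.counit (R := ℂ) ((bb l : X) : H))
    have hβ : Matrix.vecMul β T = fun k => ((bb k : X) : H) := by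
      funext k
      rw [hbψ k]
      simp only [Matrix.vecMul, dotProduct, β, T, Matrix.transpose_apply, Matrix.of_apply,
        Algebra.smul_def]
    have hw : wH i = ∑ k, ((bb k : X) : H) * y k i := by
      have e1 : Matrix.vecMul (fun k => ((bb k : X) : H)) y = Matrix.vecMul β (W' * SP) := by
        rw [← hβ, Matrix.vecMul_vecMul]
        congr 1
        calc T * y = (T * Q) * (W' * SP) := by simp only [y, mul_assoc]
          _ = _ := by rw [hQ1, one_mul]
      have e2 := congrFun e1 i
      simp only [Matrix.vecMul, dotProduct] at e2
      rw [e2]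
      simp only [wH, β, W', Z', SP, Matrix.mul_apply, Matrix.map_apply, Matrix.of_apply,
        Finset.mul_sum]
      rw [Finset.sum_comm]
      refine Finset.sum_congr rfl fun l _ => Finset.sum_congr rfl fun n _ => ?_
      rw [← Algebra.smul_def, ← Algebra.smul_def, smul_smul]
    rw [hw]
    exact X.sum_mem fun k _ => X.mul_mem (bb k).2 (hy k i)
  refine ⟨fun i => ⟨wH i, hwX i⟩, fun i => rfl, fun a => ?_⟩
  let w : Fin M → X := fun i => ⟨wH i, hwX i⟩
  change c.d a = op a • (∑ i, w i • c.d (e i)) - a • (∑ i, w i • c.d (e i))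
  obtain ⟨N, a1, a2, ha⟩ := TensorProduct.exists_sum_tmul_eq (comulX a)
  obtain ⟨co, hco, -⟩ := c.free (c.d a)
  have hcom : ∀ m, ∃ f : Fin M → X, c.d (e m * a) = ∑ i, f i • c.d (e i) :=
    fun m => (c.free (c.d (e m * a))).exists
  choose f hf using hcom
  have hopd : ∀ m, op a • c.d (e m) = ∑ i, (f m i - e m * co i) • c.d (e i) := by
    intro m
    have h := c.leibniz (e m) a
    rw [hf m] at h
    rw [← sub_eq_iff_eq_add'.mpr h, hco, Finset.smul_sum, ← Finset.sum_sub_distrib]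
    refine Finset.sum_congr rfl fun i _ => ?_
    rw [sub_smul, mul_smul]
  -- the functions D_k and G
  let G : Fin M → Fin M → H := fun k i =>
    ∑ j, χinv j k • HopfAlgebra.antipode (R := ℂ) (π j i)
  have hgen : ∀ (i : Fin M) (ι : Type) [Fintype ι] (x1 : ι → H) (x2 : ι → X),
      ∑ t, ∑ j, ∑ k, (χ k (x2 t) * χinv j k) •
          (x1 t * HopfAlgebra.antipode (R := ℂ) (π j i)) =
        ∑ k, (∑ t, χ k (x2 t) • x1 t) * G k i := by
    intro i ι _ x1 x2
    simp only [G, Finset.sum_mul_sum, smul_mul_smul_comm]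
    rw [Finset.sum_comm (s := (Finset.univ : Finset (Fin M)))]
    exact Finset.sum_congr rfl fun t _ => Finset.sum_comm
  have hcoH : ∀ i, ((co i : X) : H) = ∑ k, (∑ t, χ k (a2 t) • a1 t) * G k i := by
    intro i
    rw [hD a co hco i _ inferInstance a1 a2 ha, hgen]
  have hfH : ∀ m i, ((f m i : X) : H) =
      ∑ k, (∑ n, ∑ t, χ k (e n * a2 t) • (π m n * a1 t)) * G k i := by
    intro m i
    rw [hD _ _ (hf m) i _ inferInstance _ _ (hmul _ _ _ _ _ _ _ _ (hπ m) ha),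
      hgen i (Fin M × Fin N) (fun t => π m t.1 * a1 t.2) (fun t => e t.1 * a2 t.2)]
    simp only [Fintype.sum_prod_type]
  have hwπ : ∀ n, ∑ m, wH m * π m n =
      algebraMap ℂ H (∑ k, Coalgebra.counit (R := ℂ) ((bb k : H)) * χinv n k) := by
    intro n
    calc ∑ m, wH m * π m n = ∑ m, ∑ j, (∑ k, Coalgebra.counit (R := ℂ) ((bb k : H)) * χinv j k) •
          (HopfAlgebra.antipode (R := ℂ) (π j m) * π m n) := by
          simp only [wH, Finset.sum_mul, smul_mul_assoc, Finset.sum_smul]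
      _ = ∑ j, (∑ k, Coalgebra.counit (R := ℂ) ((bb k : H)) * χinv j k) •
          (∑ m, HopfAlgebra.antipode (R := ℂ) (π j m) * π m n) := by
          rw [Finset.sum_comm]
          simp only [Finset.smul_sum]
      _ = _ := by
          simp only [mat_left π hΔπ hεπ]
          simp [Algebra.algebraMap_eq_smul_one, Finset.sum_smul]
  have hdiff : ∀ m i, ((f m i : X) : H) - (e m : H) * (co i : H) =
      ∑ k, (∑ n, ∑ t, (∑ l, r (ψ k l) (ν (a2 t) : H) * χ l (e n)) • (π m n * a1 t)) * G k i := by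
    intro m i
    rw [hfH, hcoH, Finset.mul_sum, ← Finset.sum_sub_distrib]
    refine Finset.sum_congr rfl fun k _ => ?_
    rw [← mul_assoc, ← sub_mul]
    congr 1
    rw [heπ m, Finset.sum_mul_sum, ← Finset.sum_sub_distrib]
    refine Finset.sum_congr rfl fun n _ => ?_
    rw [← Finset.sum_sub_distrib]
    refine Finset.sum_congr rfl fun t _ => ?_
    rw [smul_mul_smul_comm, ← sub_smul, hχmul, add_sub_cancel_right]
  have hA : ∀ k, ∑ m, wH m *
      (∑ n, ∑ t, (∑ l, r (ψ k l) (ν (a2 t) : H) * χ l (e n)) • (π m n * a1 t)) =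
      (∑ t, χ k (a2 t) • a1 t) + Coalgebra.counit (R := ℂ) ((bb k : H)) • (a : H) := by
    intro k
    calc _ = ∑ n, ∑ t, (∑ l, r (ψ k l) (ν (a2 t) : H) * χ l (e n)) •
          ((∑ m, wH m * π m n) * a1 t) := by
          simp only [Finset.mul_sum, mul_smul_comm, Finset.sum_mul (s := Finset.univ)
            (f := fun m => wH m * π m _), ← mul_assoc]
          rw [Finset.sum_comm]
          refine Finset.sum_congr rfl fun n _ => ?_
          rw [Finset.sum_comm]
          simp only [Finset.smul_sum]
      _ = ∑ t, (∑ n, (∑ l, r (ψ k l) (ν (a2 t) : H) * χ l (e n)) *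
          (∑ q, Coalgebra.counit (R := ℂ) ((bb q : H)) * χinv n q)) • a1 t := by
          simp only [hwπ, ← Algebra.smul_def, smul_smul]
          rw [Finset.sum_comm]
          simp only [Finset.sum_smul (s := Finset.univ) (f := fun n => (_ : ℂ) * _)]
      _ = ∑ t, r (bb k : H) (ν (a2 t) : H) • a1 t := by
          refine Finset.sum_congr rfl fun t _ => ?_
          congr 1
          rw [hrb]
          calc _ = ∑ l, ∑ q, r (ψ k l) (ν (a2 t) : H) * Coalgebra.counit (R := ℂ) ((bb q : H)) *
                (∑ n, χ l (e n) * χinv n q) := by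
                simp only [Finset.sum_mul_sum]
                rw [Finset.sum_comm]
                refine Finset.sum_congr rfl fun l _ => ?_
                rw [Finset.sum_comm]
                refine Finset.sum_congr rfl fun q _ => ?_
                rw [Finset.mul_sum]
                exact Finset.sum_congr rfl fun n _ => by ring
            _ = _ := by
                simp only [hχinv1]
                simp [mul_comm]
      _ = _ := by
          have h := counit_right _ _ _ (hΔ _ _ _ _ ha)
          rw [← h, Finset.smul_sum, ← Finset.sum_add_distrib]
          refine Finset.sum_congr rfl fun t _ => ?_
          rw [smul_smul, ← add_smul, hχ, sub_add_cancel]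
  have key : ∀ i, co i = (∑ m, w m * (f m i - e m * co i)) - a * w i := by
    intro i
    apply Subtype.ext
    push_cast
    have h1 : ∑ m, wH m * (((f m i : X) : H) - (e m : H) * (co i : H)) =
        (co i : H) + (a : H) * wH i := by
      simp only [hdiff, Finset.mul_sum (s := Finset.univ) (f := fun k => _ * G k i), ← mul_assoc]
      rw [Finset.sum_comm]
      simp only [← Finset.sum_mul, hA, add_mul, Finset.sum_add_distrib]
      rw [← hcoH]
      congr 1
      simp only [wH, G, Finset.mul_sum, smul_mul_assoc, mul_smul_comm, smul_smul, mul_comm (χinv _ _)]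
      exact Finset.sum_comm
    change _ = ∑ m, wH m * (((f m i : X) : H) - (e m : H) * (co i : H)) - (a : H) * wH i
    rw [h1, add_sub_cancel_right]
  calc c.d a = ∑ i, co i • c.d (e i) := hco
    _ = ∑ i, ((∑ m, w m * (f m i - e m * co i)) - a * w i) • c.d (e i) :=
        Finset.sum_congr rfl fun i _ => by rw [← key i]
    _ = _ := by
      simp only [sub_smul (R := X), Finset.sum_sub_distrib, Finset.smul_sum, mul_smul,
        Finset.sum_smul]
      congr 1
      rw [Finset.sum_comm]
      refine Finset.sum_congr rfl fun m _ => ?_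
      rw [← smul_comm (w m) (op a), hopd m, Finset.smul_sum]
      simp only [sub_smul (R := X), mul_smul]
end
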